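/- In the uniform case p_1 = … = p_A = 1/A with ρ = 1 + log_A M > 1, for every integer m ≥ 0 the m-th central moment of the size S_n of a random G-trie built from n labelings satisfies E[(S_n - E(S_n))^m] = g_m · Var(S_n)^{m/2} + o(n^{mρ/2}) as n → ∞, where g_m is the m-th moment of the standard normal distribution (g_m = m!/(2^{m/2}(m/2)!) for even m and g_m = 0 for odd m). -/

import Mathlib

open MeasureTheory ProbabilityTheory Filter Topology

/-- A word `w` over `{1,…,M}×{1,…,A}` occurs in the labeling `L` of the infinite rooted
`M`-ary tree (nodes are identified with words over `Fin M`; the value of `L` on the root `[]`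
is irrelevant) if along the path determined by the first components the labels are the
second components. -/
def Occurs {M A : ℕ} (L : List (Fin M) → Fin A) (w : List (Fin M × Fin A)) : Prop :=
  ∀ t : Fin w.length, L ((w.take (t.1 + 1)).map Prod.fst) = (w.get t).2

/-- The number of labelings among `Ls` in which the word `w` occurs. -/
noncomputable def occCount {M A n : ℕ} (Ls : Fin n → List (Fin M) → Fin A)
    (w : List (Fin M × Fin A)) : ℕ :=
  Nat.card {i : Fin n // Occurs (Ls i) w}

/-- The G-trie built from the labelings `Ls`: all words occurring in at least two of them. -/
def GTrie {M A n : ℕ} (Ls : Fin n → List (Fin M) → Fin A) : Set (List (Fin M × Fin A)) :=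
  {w | 2 ≤ occCount Ls w}

/-- The size of the G-trie built from the labelings `Ls` (as a real number). -/
noncomputable def gtrieSize {M A n : ℕ} (Ls : Fin n → List (Fin M) → Fin A) : ℝ :=
  (GTrie Ls).ncard

/-- `μL` is the distribution of a random labeling of the infinite rooted `M`-ary tree where
all labels are independent with `P(letter = j) = p j`: every finite cylinder set has the
product probability. -/
def IsLabelingMeasure {M A : ℕ} (p : Fin A → ℝ) (μL : Measure (List (Fin M) → Fin A)) : Prop :=
  ∀ (s : Finset (List (Fin M))) (f : List (Fin M) → Fin A),
    μL {L | ∀ w ∈ s, L w = f w} = ∏ w ∈ s, ENNReal.ofReal (p (f w))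

/-- `g_m`, the `m`-th moment of the standard normal distribution. -/
noncomputable def gaussianMoment (m : ℕ) : ℝ :=
  if Even m then (m.factorial : ℝ) / (2 ^ (m / 2) * ((m / 2).factorial : ℝ)) else 0

/-!
Distributing the `n` labelings according to the letters they carry at the `M` children of the
root shows that the moment generating series `R n` of the size of a trie satisfies the recursion
`R n = exp (toll n * X) * (𝔼 c, ∏ a, R (fiberCard c a)) ^ M`, where `c` runs over the colourings
of the labelings by letters. For tries truncated at a finite depth this is a finite count, and it
passes to the limit because the moments of the truncated sizes stay bounded.

The number of labelings with a given letter is binomial with parameter `1 / A`, so the linear part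
of the recursion multiplies a sequence of order `n ^ s` by about `M * A * A ^ (-s)`, which is less
than `1` exactly when `s > ρ`. Applied to the second difference of the mean, this shows that the
mean is regular enough for the toll of the centred recursion to be of smaller order than
`n ^ (ρ / 2)`. The variance is then `O (n ^ ρ)` and, up to `o (n ^ ρ)`, additive along the
recursion, so that `exp (v n * X ^ 2 / 2)`, the series of a centred normal variable with the same
variance `v n`, almost satisfies the centred recursion. By induction on `m`, the difference of the
`m`-th coefficients of the two series satisfies the linear recursion up to `o (n ^ (m * ρ / 2))`.
For `m ≥ 3` the linear part is a contraction at this scale, so the difference itself is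
`o (n ^ (m * ρ / 2))`.
-/

namespace GTrie

open Finset PowerSeries
open scoped BigOperators

/-! ### Binomial averages -/

/-- The expectation of `f K` for a binomial variable `K` with `n` trials and success
probability `q`, defined by conditioning on the last trial. -/
noncomputable def binomialMean (q : ℝ) : ℕ → (ℕ → ℝ) → ℝ
  | 0, f => f 0
  | n + 1, f => q * binomialMean q n (fun k => f (k + 1)) + (1 - q) * binomialMean q n f

section BinomialMean

variable {q : ℝ} {n : ℕ}

lemma binomialMean_succ (q : ℝ) (n : ℕ) (f : ℕ → ℝ) :
    binomialMean q (n + 1) f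
      = q * binomialMean q n (fun k => f (k + 1)) + (1 - q) * binomialMean q n f :=
  rfl

lemma binomialMean_add (q : ℝ) (n : ℕ) (f g : ℕ → ℝ) :
    binomialMean q n (fun k => f k + g k) = binomialMean q n f + binomialMean q n g := by
  induction n generalizing f g with
  | zero => rfl
  | succ n ih => simp only [binomialMean, ih]; ring

lemma binomialMean_const_mul (q : ℝ) (n : ℕ) (c : ℝ) (f : ℕ → ℝ) :
    binomialMean q n (fun k => c * f k) = c * binomialMean q n f := by
  induction n generalizing f with
  | zero => rfl
  | succ n ih => simp only [binomialMean, ih]; ring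

lemma binomialMean_sub (q : ℝ) (n : ℕ) (f g : ℕ → ℝ) :
    binomialMean q n (fun k => f k - g k) = binomialMean q n f - binomialMean q n g := by
  induction n generalizing f g with
  | zero => rfl
  | succ n ih => simp only [binomialMean, ih]; ring

lemma binomialMean_const (q : ℝ) (n : ℕ) (c : ℝ) : binomialMean q n (fun _ => c) = c := by
  induction n with
  | zero => rfl
  | succ n ih => simp only [binomialMean, ih]; ring

lemma binomialMean_mono (h0 : 0 ≤ q) (h1 : q ≤ 1) {f g : ℕ → ℝ} (h : ∀ k ≤ n, f k ≤ g k) :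
    binomialMean q n f ≤ binomialMean q n g := by
  induction n generalizing f g with
  | zero => exact h 0 le_rfl
  | succ n ih =>
    have : 0 ≤ 1 - q := sub_nonneg.2 h1
    simp only [binomialMean]
    gcongr
    · exact ih fun k hk => h _ (by lia)
    · exact ih fun k hk => h _ (by lia)

lemma abs_binomialMean_le (h0 : 0 ≤ q) (h1 : q ≤ 1) (n : ℕ) (f : ℕ → ℝ) :
    |binomialMean q n f| ≤ binomialMean q n (fun k => |f k|) := by
  refine abs_le.2 ⟨?_, binomialMean_mono h0 h1 fun k _ => le_abs_self _⟩
  rw [← neg_one_mul, ← binomialMean_const_mul]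
  refine binomialMean_mono h0 h1 fun k _ => ?_
  rw [neg_one_mul]
  exact neg_abs_le _

lemma binomialMean_nonneg (h0 : 0 ≤ q) (h1 : q ≤ 1) {f : ℕ → ℝ} (h : ∀ k ≤ n, 0 ≤ f k) :
    0 ≤ binomialMean q n f :=
  (binomialMean_const q n 0).ge.trans (binomialMean_mono h0 h1 h)

lemma binomialMean_succ_sub (q : ℝ) (n : ℕ) (f : ℕ → ℝ) :
    binomialMean q (n + 1) f - binomialMean q n f
      = q * binomialMean q n (fun k => f (k + 1) - f k) := by
  rw [binomialMean_sub, binomialMean_succ]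
  ring

lemma binomialMean_natCast_mul (q : ℝ) (n : ℕ) (f : ℕ → ℝ) :
    binomialMean q (n + 1) (fun k => k * f k)
      = (n + 1) * q * binomialMean q n (fun k => f (k + 1)) := by
  induction n generalizing f with
  | zero => simp [binomialMean]
  | succ n ih =>
    have shift : binomialMean q (n + 1) (fun k => ((k + 1 : ℕ) : ℝ) * f (k + 1))
        = binomialMean q (n + 1) (fun k => f (k + 1))
          + binomialMean q (n + 1) (fun k => k * f (k + 1)) := by
      rw [← binomialMean_add]
      congr 1
      ext k
      push_cast
      ring
    rw [binomialMean_succ q (n + 1), shift, ih fun k => f (k + 1), ih f,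
      binomialMean_succ q n]
    push_cast
    ring

lemma binomialMean_natCast (q : ℝ) (n : ℕ) : binomialMean q n (fun k => (k : ℝ)) = n * q := by
  cases n with
  | zero => simp [binomialMean]
  | succ n =>
    have h := binomialMean_natCast_mul q n fun _ => 1
    simp only [mul_one, binomialMean_const] at h
    rw [h]
    push_cast
    ring

lemma binomialMean_natCast_mul_pred (q : ℝ) (n : ℕ) :
    binomialMean q n (fun k => (k : ℝ) * (k - 1)) = n * (n - 1) * q ^ 2 := by
  cases n with
  | zero => simp [binomialMean]
  | succ n =>
    have h := binomialMean_natCast_mul q n fun k => (k : ℝ) - 1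
    simp only [Nat.cast_add, Nat.cast_one, add_sub_cancel_right, binomialMean_natCast] at h
    rw [h]
    push_cast
    ring

lemma binomialMean_sq_sub (q : ℝ) (n : ℕ) :
    binomialMean q n (fun k => ((k : ℝ) - n * q) ^ 2) = n * q * (1 - q) := by
  have expand : (fun k : ℕ => ((k : ℝ) - n * q) ^ 2)
      = fun k : ℕ => ((k : ℝ) * (k - 1) + (1 - 2 * n * q) * k) + (n * q) ^ 2 := by
    ext
    ring
  rw [expand, binomialMean_add, binomialMean_add, binomialMean_const_mul,
    binomialMean_natCast_mul_pred, binomialMean_natCast, binomialMean_const]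
  ring

lemma binomialMean_pow (q x : ℝ) (n : ℕ) :
    binomialMean q n (fun k => x ^ k) = (q * x + (1 - q)) ^ n := by
  induction n with
  | zero => rfl
  | succ n ih =>
    simp only [binomialMean, pow_succ', binomialMean_const_mul, ih]
    ring

-- The factor `k - (n + 1) q` is, up to normalization, the score of the binomial family.
lemma binomialMean_succ_sub_eq_div (hq : q < 1) (n : ℕ) (f : ℕ → ℝ) :
    binomialMean q (n + 1) f - binomialMean q n f
      = binomialMean q (n + 1) (fun k => ((k : ℝ) - (n + 1) * q) * f k) / ((n + 1) * (1 - q)) := by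
  have : 1 - q ≠ 0 := (sub_pos.2 hq).ne'
  simp only [sub_mul]
  rw [binomialMean_sub, binomialMean_const_mul, binomialMean_natCast_mul,
    eq_div_iff (by positivity), binomialMean_succ q n f]
  ring

lemma binomialMean_rpow_le (h0 : 0 ≤ q) (h1 : q ≤ 1) (n : ℕ) {f : ℕ → ℝ} (hf : ∀ k, 0 ≤ f k)
    {s : ℝ} (hs0 : 0 ≤ s) (hs1 : s ≤ 1) :
    binomialMean q n (fun k => f k ^ s) ≤ binomialMean q n f ^ s := by
  induction n generalizing f with
  | zero => rfl
  | succ n ih =>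
    have hq : 0 ≤ 1 - q := sub_nonneg.2 h1
    simp only [binomialMean]
    calc _ ≤ q * binomialMean q n (fun k => f (k + 1)) ^ s + (1 - q) * binomialMean q n f ^ s := by
          gcongr
          · exact ih fun k => hf _
          · exact ih hf
      _ ≤ _ := (Real.concaveOn_rpow hs0 hs1).2 (binomialMean_nonneg h0 h1 fun k _ => hf _)
          (binomialMean_nonneg h0 h1 fun k _ => hf _) h0 hq (by ring)

lemma rpow_binomialMean_le (h0 : 0 ≤ q) (h1 : q ≤ 1) (n : ℕ) {f : ℕ → ℝ} (hf : ∀ k, 0 ≤ f k)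
    {s : ℝ} (hs : 1 ≤ s) : binomialMean q n f ^ s ≤ binomialMean q n (fun k => f k ^ s) := by
  induction n generalizing f with
  | zero => rfl
  | succ n ih =>
    have hq : 0 ≤ 1 - q := sub_nonneg.2 h1
    simp only [binomialMean]
    calc _ ≤ q * binomialMean q n (fun k => f (k + 1)) ^ s + (1 - q) * binomialMean q n f ^ s :=
          (convexOn_rpow hs).2 (binomialMean_nonneg h0 h1 fun k _ => hf _)
            (binomialMean_nonneg h0 h1 fun k _ => hf _) h0 hq (by ring)
      _ ≤ _ := by
          gcongr
          · exact ih fun k => hf _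
          · exact ih hf

lemma binomialMean_abs_sub_le (h0 : 0 ≤ q) (h1 : q ≤ 1) (n : ℕ) :
    binomialMean q n (fun k => |(k : ℝ) - n * q|) ≤ ((n : ℝ) + 1) ^ (1 / 2 : ℝ) := by
  have jensen := binomialMean_rpow_le h0 h1 n (f := fun k => ((k : ℝ) - n * q) ^ 2)
    (fun k => sq_nonneg _) (s := 1 / 2) (by norm_num) (by norm_num)
  simp only [← Real.sqrt_eq_rpow, Real.sqrt_sq_eq_abs, binomialMean_sq_sub] at jensen ⊢
  have hq : q * (1 - q) ≤ 1 := by nlinarith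
  refine jensen.trans (Real.sqrt_le_sqrt ?_)
  calc (n : ℝ) * q * (1 - q) = n * (q * (1 - q)) := by ring
    _ ≤ n + 1 := by nlinarith [(Nat.cast_nonneg n : (0 : ℝ) ≤ n)]

lemma binomialMean_exp_le (h0 : 0 ≤ q) (h1 : q ≤ 1) {h : ℝ} (hh : |h| ≤ 1) (hn : n * h ^ 2 ≤ 1) :
    binomialMean q n (fun k => Real.exp (h * ((k : ℝ) - n * q))) ≤ Real.exp 1 := by
  have factor : (fun k : ℕ => Real.exp (h * ((k : ℝ) - n * q)))
      = fun k : ℕ => Real.exp (-(h * (n * q))) * Real.exp h ^ k := by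
    ext k
    rw [← Real.exp_nat_mul, ← Real.exp_add]
    ring_nf
  have : 0 ≤ 1 - q := sub_nonneg.2 h1
  have base_le : q * Real.exp h + (1 - q) ≤ Real.exp (q * (Real.exp h - 1)) := by
    linarith [Real.add_one_le_exp (q * (Real.exp h - 1))]
  have exp_le : Real.exp h - 1 - h ≤ h ^ 2 := (abs_le.1 (Real.abs_exp_sub_one_sub_id_le hh)).2
  rw [factor, binomialMean_const_mul, binomialMean_pow]
  calc Real.exp (-(h * (n * q))) * (q * Real.exp h + (1 - q)) ^ n
      ≤ Real.exp (-(h * (n * q))) * Real.exp (q * (Real.exp h - 1)) ^ n := by gcongr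
    _ = Real.exp (n * q * (Real.exp h - 1 - h)) := by
      rw [← Real.exp_nat_mul, ← Real.exp_add]
      ring_nf
    _ ≤ Real.exp 1 := by
      gcongr
      calc n * q * (Real.exp h - 1 - h) ≤ n * q * h ^ 2 := by gcongr
        _ = q * (n * h ^ 2) := by ring
        _ ≤ 1 := mul_le_one₀ h1 (by positivity) hn

lemma pow_two_mul_le_factorial_mul_exp (y : ℝ) (i : ℕ) :
    y ^ (2 * i) ≤ (2 * i).factorial * (Real.exp y + Real.exp (-y)) := by
  have h := Real.pow_div_factorial_le_exp |y| (abs_nonneg y) (2 * i)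
  rw [(even_two_mul i).pow_abs, div_le_iff₀' (by positivity)] at h
  refine h.trans (by gcongr; exact Real.exp_abs_le y)

lemma binomialMean_exp_sub_le (h0 : 0 ≤ q) (h1 : q ≤ 1) {h c : ℝ} (hh : |h| ≤ 1)
    (hn : n * h ^ 2 ≤ 1) (hc : |c - n * q| ≤ 1) :
    binomialMean q n (fun k => Real.exp (h * ((k : ℝ) - c))) ≤ Real.exp 1 * Real.exp 1 := by
  have hhc : -(h * (c - n * q)) ≤ 1 := by
    refine (neg_le_abs _).trans ?_
    rw [abs_mul]
    exact mul_le_one₀ hh (abs_nonneg _) hc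
  calc _ ≤ binomialMean q n (fun k => Real.exp 1 * Real.exp (h * ((k : ℝ) - n * q))) :=
        binomialMean_mono h0 h1 fun k _ => by
          rw [← Real.exp_add]
          gcongr
          linarith
    _ ≤ _ := by
      rw [binomialMean_const_mul]
      gcongr
      exact binomialMean_exp_le h0 h1 hh hn

lemma binomialMean_sq_sub_div_pow_le (h0 : 0 ≤ q) (h1 : q ≤ 1) {c : ℝ} (hc : |c - n * q| ≤ 1)
    (i : ℕ) :
    binomialMean q n (fun k => (((k : ℝ) - c) ^ 2 / (n + 1)) ^ i)
      ≤ (2 * i).factorial * (2 * (Real.exp 1 * Real.exp 1)) := by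
  set h : ℝ := 1 / √(n + 1)
  have h_sq : h ^ 2 = 1 / (n + 1) := by rw [div_pow, one_pow, Real.sq_sqrt (by positivity)]
  have h_abs : |h| ≤ 1 := by
    rw [← sq_le_one_iff_abs_le_one, h_sq]
    exact div_le_one_of_le₀ (by simp) (by positivity)
  have hn : n * h ^ 2 ≤ 1 := by
    rw [h_sq, mul_one_div]
    exact div_le_one_of_le₀ (by simp) (by positivity)
  have pointwise : ∀ k ≤ n, (((k : ℝ) - c) ^ 2 / (n + 1)) ^ i
      ≤ (2 * i).factorial * (Real.exp (h * ((k : ℝ) - c)) + Real.exp (-h * ((k : ℝ) - c))) := by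
    intro k _
    rw [neg_mul]
    convert pow_two_mul_le_factorial_mul_exp (h * ((k : ℝ) - c)) i using 1
    rw [pow_mul, mul_pow, h_sq]
    congr 1
    ring
  refine (binomialMean_mono h0 h1 pointwise).trans ?_
  rw [binomialMean_const_mul, binomialMean_add, two_mul (Real.exp 1 * Real.exp 1)]
  gcongr
  · exact binomialMean_exp_sub_le h0 h1 h_abs hn hc
  · exact binomialMean_exp_sub_le h0 h1 (by rwa [abs_neg]) (by rwa [neg_sq]) hc

end BinomialMean

/-! ### Recursive inequalities driven by a binomial average -/

section Contraction

variable {q s K : ℝ} {n : ℕ}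

lemma binomialMean_le_pow_mul (h0 : 0 ≤ q) (h1 : q ≤ 1) {f : ℕ → ℝ} (h : ∀ k < n, f k ≤ 0) :
    binomialMean q n f ≤ q ^ n * f n := by
  induction n generalizing f with
  | zero => simp [binomialMean]
  | succ n ih =>
    have shifted := ih (f := fun k => f (k + 1)) fun k hk => h _ (by lia)
    have unshifted : binomialMean q n f ≤ 0 :=
      (binomialMean_mono h0 h1 fun k hk => h k (by lia)).trans_eq (binomialMean_const q n 0)
    rw [binomialMean_succ, pow_succ', mul_assoc]
    linarith [mul_le_mul_of_nonneg_left shifted h0,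
      mul_nonpos_of_nonneg_of_nonpos (sub_nonneg.2 h1) unshifted]

-- A first index at which `b` fails to dominate `x` would contribute to its own average only
-- with weight `K * q ^ n < 1`.
lemma le_of_le_binomialMean (h0 : 0 ≤ q) (h1 : q ≤ 1) (hK : 0 ≤ K) {x y b : ℕ → ℝ} {n₀ : ℕ}
    (hKq : ∀ n ≥ n₀, K * q ^ n < 1) (hinit : ∀ n < n₀, x n ≤ b n)
    (hx : ∀ n ≥ n₀, x n ≤ K * binomialMean q n x + y n)
    (hb : ∀ n ≥ n₀, K * binomialMean q n b + y n ≤ b n) (n : ℕ) : x n ≤ b n := by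
  induction n using Nat.strong_induction_on with
  | _ n ih =>
    rcases lt_or_ge n n₀ with hn | hn
    · exact hinit n hn
    have mean_le : binomialMean q n x - binomialMean q n b ≤ q ^ n * (x n - b n) := by
      rw [← binomialMean_sub]
      exact binomialMean_le_pow_mul h0 h1 fun k hk => sub_nonpos.2 (ih k hk)
    have := mul_le_mul_of_nonneg_left mean_le hK
    have := hKq n hn
    by_contra! hlt
    nlinarith [hx n hn, hb n hn]

lemma exists_forall_lt_abs_le (x : ℕ → ℝ) (n₀ : ℕ) : ∃ C ≥ 0, ∀ n < n₀, |x n| ≤ C :=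
  ⟨∑ k ∈ range n₀, |x k|, sum_nonneg fun _ _ => abs_nonneg _, fun _ hn =>
    single_le_sum (f := fun k => |x k|) (fun _ _ => abs_nonneg _) (mem_range.2 hn)⟩

lemma tendsto_natCast_add_one_atTop : Tendsto (fun n : ℕ => (n : ℝ) + 1) atTop atTop :=
  tendsto_atTop_add_const_right _ _ tendsto_natCast_atTop_atTop

lemma tendsto_natCast_add_one_rpow_neg {s : ℝ} (hs : 0 < s) :
    Tendsto (fun n : ℕ => ((n : ℝ) + 1) ^ (-s)) atTop (𝓝 0) :=
  (tendsto_rpow_neg_atTop hs).comp tendsto_natCast_add_one_atTop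

lemma one_le_natCast_add_one_rpow (hs : 0 ≤ s) (n : ℕ) : 1 ≤ ((n : ℝ) + 1) ^ s :=
  Real.one_le_rpow (by simp) hs

lemma natCast_add_one_rpow_le {k n : ℕ} (hk : k ≤ n) (s : ℝ) :
    ((k : ℝ) + 1) ^ s ≤ 1 + ((n : ℝ) + 1) ^ s := by
  rcases le_total 0 s with hs | hs
  · have : ((k : ℝ) + 1) ^ s ≤ ((n : ℝ) + 1) ^ s := by gcongr
    linarith
  · have := Real.rpow_le_one_of_one_le_of_nonpos (x := (k : ℝ) + 1) (by simp) hs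
    have : 0 ≤ ((n : ℝ) + 1) ^ s := by positivity
    linarith

lemma one_le_four_div_mul_sq_of_le_abs {k : ℕ} {ε : ℝ} (h0 : 0 ≤ q) (h1 : q ≤ 1) (hε : 0 < ε)
    (hn : 2 / ε ≤ (n : ℝ) + 1) (hk : ε ≤ |((k : ℝ) + 1) / (n + 1) - q|) :
    1 ≤ 4 / (((n : ℝ) + 1) ^ 2 * ε ^ 2) * ((k : ℝ) - n * q) ^ 2 := by
  have hN : (0 : ℝ) < (n : ℝ) + 1 := by positivity
  have far : ε * ((n : ℝ) + 1) ≤ |(k : ℝ) - n * q| + 1 := by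
    calc ε * ((n : ℝ) + 1) ≤ |((k : ℝ) + 1) / (n + 1) - q| * (n + 1) := by gcongr
      _ = |((k : ℝ) - n * q) + (1 - q)| := by
        rw [← abs_of_pos hN, ← abs_mul, abs_of_pos hN]
        congr 1
        field_simp
        ring
      _ ≤ |(k : ℝ) - n * q| + |1 - q| := abs_add_le _ _
      _ ≤ _ := by gcongr; exact abs_le.2 ⟨by linarith, by linarith⟩
  rw [div_le_iff₀ hε] at hn
  have : (ε * ((n : ℝ) + 1) / 2) ^ 2 ≤ |(k : ℝ) - n * q| ^ 2 := by
    gcongr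
    linarith
  rw [sq_abs] at this
  rw [div_mul_eq_mul_div, one_le_div (by positivity)]
  nlinarith

lemma binomialMean_rpow_le_of_forall_near {θ ε : ℝ} (h0 : 0 ≤ q) (h1 : q ≤ 1) (hθ : 0 ≤ θ)
    (hε : 0 < ε) (hn : 2 / ε ≤ (n : ℝ) + 1) (hnear : ∀ x, |x - q| < ε → x ^ s ≤ θ) :
    binomialMean q n (fun k => ((k : ℝ) + 1) ^ s)
      ≤ (θ + (((n : ℝ) + 1) ^ (-(s + 1)) + ((n : ℝ) + 1) ^ (-(1 : ℝ))) * (4 / ε ^ 2))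
        * ((n : ℝ) + 1) ^ s := by
  have hN : (0 : ℝ) < (n : ℝ) + 1 := by positivity
  set c : ℝ := (1 + ((n : ℝ) + 1) ^ s) * (4 / (((n : ℝ) + 1) ^ 2 * ε ^ 2)) with hc
  have pointwise : ∀ k ≤ n, ((k : ℝ) + 1) ^ s
      ≤ θ * ((n : ℝ) + 1) ^ s + c * ((k : ℝ) - n * q) ^ 2 := by
    intro k hk
    rcases lt_or_ge |((k : ℝ) + 1) / (n + 1) - q| ε with hx | hx
    · have := hnear _ hx
      rw [Real.div_rpow (by positivity) hN.le, div_le_iff₀ (by positivity)] at this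
      exact this.trans (le_add_of_nonneg_right (by positivity))
    · calc ((k : ℝ) + 1) ^ s ≤ (1 + ((n : ℝ) + 1) ^ s) * 1 :=
            (natCast_add_one_rpow_le hk s).trans_eq (mul_one _).symm
        _ ≤ c * ((k : ℝ) - n * q) ^ 2 := by
          rw [hc, mul_assoc]
          gcongr
          exact one_le_four_div_mul_sq_of_le_abs h0 h1 hε hn hx
        _ ≤ _ := le_add_of_nonneg_left (by positivity)
  have var_le : (n : ℝ) * q * (1 - q) ≤ n + 1 := by
    have hq : q * (1 - q) ≤ 1 := by nlinarith
    nlinarith [(Nat.cast_nonneg n : (0 : ℝ) ≤ n)]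
  calc _ ≤ θ * ((n : ℝ) + 1) ^ s + c * (n * q * (1 - q)) := by
        refine (binomialMean_mono h0 h1 pointwise).trans_eq ?_
        rw [binomialMean_add, binomialMean_const, binomialMean_const_mul, binomialMean_sq_sub]
    _ ≤ θ * ((n : ℝ) + 1) ^ s + c * (n + 1) := by gcongr
    _ = _ := by
      rw [hc, Real.rpow_neg hN.le, Real.rpow_neg hN.le, Real.rpow_add hN, Real.rpow_one]
      field_simp

lemma eventually_binomialMean_rpow_le (h0 : 0 < q) (h1 : q ≤ 1) (hs : -1 < s) {θ : ℝ}
    (hθ : q ^ s < θ) :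
    ∀ᶠ n : ℕ in atTop,
      binomialMean q n (fun k => ((k : ℝ) + 1) ^ s) ≤ θ * ((n : ℝ) + 1) ^ s := by
  obtain ⟨θ₁, hqθ₁, hθ₁⟩ := exists_between hθ
  have near : ∀ᶠ x in 𝓝 q, x ^ s < θ₁ :=
    (Real.continuousAt_rpow_const _ _ (Or.inl h0.ne')).eventually (gt_mem_nhds hqθ₁)
  obtain ⟨ε, hε, hball⟩ := Metric.eventually_nhds_iff.1 near
  have lim : Tendsto (fun n : ℕ => θ₁
      + (((n : ℝ) + 1) ^ (-(s + 1)) + ((n : ℝ) + 1) ^ (-(1 : ℝ))) * (4 / ε ^ 2)) atTop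
      (𝓝 (θ₁ + (0 + 0) * (4 / ε ^ 2))) :=
    (((tendsto_natCast_add_one_rpow_neg (by linarith)).add
      (tendsto_natCast_add_one_rpow_neg one_pos)).mul_const _).const_add _
  filter_upwards [lim.eventually_lt_const (by simpa using hθ₁),
    tendsto_natCast_add_one_atTop.eventually_ge_atTop (2 / ε)] with n hlt hge
  refine (binomialMean_rpow_le_of_forall_near h0.le h1 ((Real.rpow_pos_of_pos h0 s).trans hqθ₁).le
    hε hge fun x hx => (hball hx).le).trans ?_
  gcongr

lemma exists_eventually_mul_binomialMean_rpow_le (h0 : 0 < q) (h1 : q ≤ 1) (hs : -1 < s)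
    (hK : 0 ≤ K) (hKs : K * q ^ s < 1) :
    ∃ θ < 1, ∀ᶠ n : ℕ in atTop,
      K * binomialMean q n (fun k => ((k : ℝ) + 1) ^ s) ≤ θ * ((n : ℝ) + 1) ^ s := by
  have near : ∀ᶠ t in 𝓝[>] (q ^ s), K * t < 1 :=
    nhdsWithin_le_nhds (((continuous_const_mul K).tendsto (q ^ s)).eventually_lt_const hKs)
  obtain ⟨t, hKt, hqt⟩ := (near.and self_mem_nhdsWithin).exists
  refine ⟨K * t, hKt, ?_⟩
  filter_upwards [eventually_binomialMean_rpow_le h0 h1 hs hqt] with n hn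
  rw [mul_assoc]
  gcongr

lemma eventually_mul_pow_lt_one (h0 : 0 ≤ q) (h1 : q < 1) (K : ℝ) :
    ∀ᶠ n : ℕ in atTop, K * q ^ n < 1 := by
  have lim := (tendsto_pow_atTop_nhds_zero_of_lt_one h0 h1).const_mul K
  rw [mul_zero] at lim
  exact lim.eventually_lt_const one_pos

lemma exists_abs_le_rpow_of_le_binomialMean (h0 : 0 < q) (h1 : q < 1) (hs : -1 < s) (hK : 0 ≤ K)
    (hKs : K * q ^ s < 1) {x : ℕ → ℝ} {C₀ : ℝ} (hC₀ : 0 ≤ C₀)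
    (h : ∀ᶠ n : ℕ in atTop,
      |x n| ≤ K * binomialMean q n (fun k => |x k|) + C₀ * ((n : ℝ) + 1) ^ s) :
    ∃ C ≥ 0, ∀ n : ℕ, |x n| ≤ C * ((n : ℝ) + 1) ^ s := by
  obtain ⟨θ, hθ, hmean⟩ := exists_eventually_mul_binomialMean_rpow_le h0 h1.le hs hK hKs
  obtain ⟨n₀, hn₀⟩ := eventually_atTop.1
    ((eventually_mul_pow_lt_one h0.le h1 K).and (hmean.and h))
  obtain ⟨C₁, hC₁, hinit⟩ := exists_forall_lt_abs_le (fun n => |x n| / ((n : ℝ) + 1) ^ s) n₀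
  have hθ' : 0 < 1 - θ := sub_pos.2 hθ
  refine ⟨C₁ + C₀ / (1 - θ), by positivity, le_of_le_binomialMean h0.le h1.le hK
    (fun n hn => (hn₀ n hn).1) (fun n hn => ?_) (fun n hn => (hn₀ n hn).2.2) fun n hn => ?_⟩
  · have hxn := hinit n hn
    rw [abs_of_nonneg (by positivity), div_le_iff₀ (by positivity)] at hxn
    refine hxn.trans ?_
    gcongr
    exact le_add_of_nonneg_right (by positivity)
  · have hC : C₀ ≤ (1 - θ) * (C₁ + C₀ / (1 - θ)) := by
      rw [mul_add, mul_div_cancel₀ _ hθ'.ne']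
      exact le_add_of_nonneg_left (by positivity)
    rw [binomialMean_const_mul]
    calc _ = (C₁ + C₀ / (1 - θ)) * (K * binomialMean q n (fun k => ((k : ℝ) + 1) ^ s))
          + C₀ * ((n : ℝ) + 1) ^ s := by ring
      _ ≤ (C₁ + C₀ / (1 - θ)) * (θ * ((n : ℝ) + 1) ^ s)
          + ((1 - θ) * (C₁ + C₀ / (1 - θ))) * ((n : ℝ) + 1) ^ s := by
        refine add_le_add (mul_le_mul_of_nonneg_left (hn₀ n hn).2.1 (by positivity)) ?_
        gcongr
      _ = _ := by ring

lemma isLittleO_of_forall_abs_le_add {s t : ℝ} (hts : t < s) {x : ℕ → ℝ}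
    (h : ∀ η > 0, ∃ C ≥ 0, ∀ n : ℕ, |x n| ≤ η * ((n : ℝ) + 1) ^ s + C * ((n : ℝ) + 1) ^ t) :
    x =o[atTop] fun n : ℕ => ((n : ℝ) + 1) ^ s := by
  refine Asymptotics.isLittleO_iff.2 fun η hη => ?_
  obtain ⟨C, _, hx⟩ := h (η / 2) (half_pos hη)
  have lim := (tendsto_natCast_add_one_rpow_neg (sub_pos.2 hts)).const_mul C
  rw [mul_zero] at lim
  filter_upwards [lim.eventually_lt_const (half_pos hη)] with n hn
  rw [Real.norm_eq_abs, Real.norm_of_nonneg (by positivity)]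
  calc |x n| ≤ η / 2 * ((n : ℝ) + 1) ^ s + C * ((n : ℝ) + 1) ^ t := hx n
    _ = η / 2 * ((n : ℝ) + 1) ^ s + C * ((n : ℝ) + 1) ^ (-(s - t)) * ((n : ℝ) + 1) ^ s := by
      rw [mul_assoc, ← Real.rpow_add (by positivity)]
      ring_nf
    _ ≤ η / 2 * ((n : ℝ) + 1) ^ s + η / 2 * ((n : ℝ) + 1) ^ s := by gcongr
    _ = η * ((n : ℝ) + 1) ^ s := by ring

-- `K * q ^ s < 1` persists for some `t < s`; then `η (n + 1) ^ s + D (n + 1) ^ t` is a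
-- supersolution for every `D ≥ 0`, and `D` can absorb the initial values.
lemma isLittleO_of_le_binomialMean (h0 : 0 < q) (h1 : q < 1) (hs : -1 < s) (hK : 0 ≤ K)
    (hKs : K * q ^ s < 1) {x y : ℕ → ℝ} (hy : y =o[atTop] fun n : ℕ => ((n : ℝ) + 1) ^ s)
    (h : ∀ n, |x n| ≤ K * binomialMean q n (fun k => |x k|) + |y n|) :
    x =o[atTop] fun n : ℕ => ((n : ℝ) + 1) ^ s := by
  have near : ∀ᶠ t in 𝓝[<] s, K * q ^ t < 1 := nhdsWithin_le_nhds
    ((Real.continuousAt_const_rpow h0.ne').const_mul K |>.eventually_lt_const hKs)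
  obtain ⟨t, ⟨hKt, ht⟩, hts : t < s⟩ :=
    ((near.and (nhdsWithin_le_nhds (lt_mem_nhds hs))).and self_mem_nhdsWithin).exists
  obtain ⟨θ, hθ, hmean_s⟩ := exists_eventually_mul_binomialMean_rpow_le h0 h1.le hs hK hKs
  obtain ⟨θ', hθ', hmean_t⟩ := exists_eventually_mul_binomialMean_rpow_le h0 h1.le ht hK hKt
  refine isLittleO_of_forall_abs_le_add hts fun η hη => ?_
  have hy' := Asymptotics.isLittleO_iff.1 hy (mul_pos (sub_pos.2 hθ) hη)
  obtain ⟨n₀, hn₀⟩ := eventually_atTop.1 ((eventually_mul_pow_lt_one h0.le h1 K).and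
    ((hmean_s.and hmean_t).and hy'))
  obtain ⟨D, hD, hinit⟩ := exists_forall_lt_abs_le (fun n => |x n| / ((n : ℝ) + 1) ^ t) n₀
  refine ⟨D, hD, le_of_le_binomialMean h0.le h1.le hK (fun n hn => (hn₀ n hn).1) (fun n hn => ?_)
    (fun n _ => h n) fun n hn => ?_⟩
  · have hxn := hinit n hn
    rw [abs_of_nonneg (by positivity), div_le_iff₀ (by positivity)] at hxn
    exact hxn.trans (le_add_of_nonneg_left (by positivity))
  · obtain ⟨-, ⟨hsn, htn⟩, hyn⟩ := hn₀ n hn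
    rw [Real.norm_eq_abs, Real.norm_of_nonneg (by positivity)] at hyn
    rw [binomialMean_add, binomialMean_const_mul, binomialMean_const_mul]
    calc _ = η * (K * binomialMean q n (fun k => ((k : ℝ) + 1) ^ s))
          + D * (K * binomialMean q n (fun k => ((k : ℝ) + 1) ^ t)) + |y n| := by ring
      _ ≤ η * (θ * ((n : ℝ) + 1) ^ s) + D * (1 * ((n : ℝ) + 1) ^ t)
          + (1 - θ) * η * ((n : ℝ) + 1) ^ s := by
        refine add_le_add_three (mul_le_mul_of_nonneg_left hsn hη.le)
          (mul_le_mul_of_nonneg_left (htn.trans ?_) hD) hyn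
        gcongr
      _ = _ := by ring

end Contraction

section CriticalExponent

variable {q s ρ K : ℝ}

lemma natCast_mul_pred_nonneg (n : ℕ) : 0 ≤ (n : ℝ) * (n - 1) := by
  cases n with
  | zero => simp
  | succ n =>
    push_cast
    rw [add_sub_cancel_right]
    positivity

lemma mul_binomialMean_rpow_half_le (h0 : 0 ≤ q) (h1 : q ≤ 1) (hK : 0 ≤ K) (hKρ : K * q ^ ρ = 1)
    (hρ0 : 0 ≤ ρ) (hρ2 : ρ ≤ 2) (n : ℕ) :
    K * binomialMean q n (fun k => ((k : ℝ) * (k - 1)) ^ (ρ / 2))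
      ≤ ((n : ℝ) * (n - 1)) ^ (ρ / 2) := by
  have jensen := binomialMean_rpow_le h0 h1 n natCast_mul_pred_nonneg (s := ρ / 2)
    (by linarith) (by linarith)
  have q_rpow : (q ^ 2) ^ (ρ / 2) = q ^ ρ := by
    rw [← Real.rpow_natCast, ← Real.rpow_mul h0]
    congr 1
    push_cast
    ring
  rw [binomialMean_natCast_mul_pred, Real.mul_rpow (natCast_mul_pred_nonneg n) (sq_nonneg q),
    q_rpow] at jensen
  calc _ ≤ K * (((n : ℝ) * (n - 1)) ^ (ρ / 2) * q ^ ρ) := by gcongr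
    _ = (K * q ^ ρ) * ((n : ℝ) * (n - 1)) ^ (ρ / 2) := by ring
    _ = _ := by rw [hKρ, one_mul]

lemma rpow_mul_rpow_le_binomialMean (h0 : 0 ≤ q) (h1 : q ≤ 1) (hs : 1 ≤ s) (n : ℕ) :
    q ^ s * ((n : ℝ) + 1) ^ s ≤ binomialMean q n (fun k => ((k : ℝ) + 1) ^ s) := by
  have jensen := rpow_binomialMean_le h0 h1 n (f := fun k => (k : ℝ) + 1)
    (fun k => by positivity) hs
  rw [binomialMean_add, binomialMean_natCast, binomialMean_const] at jensen
  rw [← Real.mul_rpow h0 (by positivity)]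
  refine le_trans ?_ jensen
  gcongr
  linarith

lemma rpow_half_le_natCast_add_one_rpow (hρ : 0 ≤ ρ) (n : ℕ) :
    ((n : ℝ) * (n - 1)) ^ (ρ / 2) ≤ ((n : ℝ) + 1) ^ ρ := by
  calc ((n : ℝ) * (n - 1)) ^ (ρ / 2) ≤ (((n : ℝ) + 1) ^ 2) ^ (ρ / 2) := by
        refine Real.rpow_le_rpow (natCast_mul_pred_nonneg n) ?_ (by positivity)
        nlinarith [(Nat.cast_nonneg n : (0 : ℝ) ≤ n)]
    _ = ((n : ℝ) + 1) ^ ρ := by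
      rw [← Real.rpow_natCast, ← Real.rpow_mul (by positivity)]
      congr 1
      push_cast
      ring

lemma eventually_supersolution (h0 : 0 < q) (h1 : q < 1) (hK : 0 ≤ K) (hKρ : K * q ^ ρ = 1)
    (hρ0 : 0 ≤ ρ) (hρ2 : ρ ≤ 2) (hs : 1 ≤ s) {B C₀ : ℝ} (hB : 0 ≤ B)
    (hBC : B * (K * q ^ s - 1) = C₀ + 1) (D : ℝ) :
    ∀ᶠ n : ℕ in atTop, ∀ C ≥ 0,
      K * binomialMean q n
          (fun k => C * ((k : ℝ) * (k - 1)) ^ (ρ / 2) - B * ((k : ℝ) + 1) ^ s + D)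
        + C₀ * ((n : ℝ) + 1) ^ s
      ≤ C * ((n : ℝ) * (n - 1)) ^ (ρ / 2) - B * ((n : ℝ) + 1) ^ s + D := by
  have lim : Tendsto (fun n : ℕ => ((n : ℝ) + 1) ^ s) atTop atTop :=
    (tendsto_rpow_atTop (by linarith)).comp tendsto_natCast_add_one_atTop
  filter_upwards [lim.eventually_ge_atTop ((K - 1) * D)] with n hn C hC
  rw [binomialMean_add, binomialMean_sub, binomialMean_const_mul, binomialMean_const_mul,
    binomialMean_const]
  have main := mul_le_mul_of_nonneg_left
    (mul_binomialMean_rpow_half_le h0.le h1.le hK hKρ hρ0 hρ2 n) hC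
  have correction := mul_le_mul_of_nonneg_left
    (rpow_mul_rpow_le_binomialMean h0.le h1.le hs n) (mul_nonneg hB hK)
  have gain : B * (K * q ^ s - 1) * ((n : ℝ) + 1) ^ s = (C₀ + 1) * ((n : ℝ) + 1) ^ s := by
    rw [hBC]
  linarith

lemma one_lt_mul_rpow_of_lt (h0 : 0 < q) (h1 : q < 1) (hKρ : K * q ^ ρ = 1) (hs : s < ρ) :
    1 < K * q ^ s := by
  have hK : 0 < K := pos_of_mul_pos_left (hKρ ▸ one_pos) (Real.rpow_nonneg h0.le ρ)
  rw [← hKρ]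
  exact mul_lt_mul_of_pos_left (Real.rpow_lt_rpow_of_exponent_gt h0 h1 hs) hK

-- At the critical exponent `K * q ^ ρ = 1` the power `(n + 1) ^ ρ` itself leaves no room for the
-- perturbation; the supersolution `C (n (n - 1)) ^ (ρ / 2) - B (n + 1) ^ s + D` does.
lemma exists_le_rpow_of_le_binomialMean (h0 : 0 < q) (h1 : q < 1) (hKρ : K * q ^ ρ = 1)
    (hρ2 : ρ ≤ 2) (hs1 : 1 ≤ s) (hsρ : s < ρ) {x : ℕ → ℝ} {C₀ : ℝ} (hC₀ : 0 ≤ C₀)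
    (h : ∀ n, x n ≤ K * binomialMean q n x + C₀ * ((n : ℝ) + 1) ^ s) :
    ∃ C ≥ 0, ∀ n : ℕ, x n ≤ C * ((n : ℝ) + 1) ^ ρ := by
  have hK : 0 < K := pos_of_mul_pos_left (hKρ ▸ one_pos) (Real.rpow_nonneg h0.le ρ)
  have hη : 0 < K * q ^ s - 1 := sub_pos.2 (one_lt_mul_rpow_of_lt h0 h1 hKρ hsρ)
  set B := (C₀ + 1) / (K * q ^ s - 1)
  have hB : 0 ≤ B := by positivity
  have hBC : B * (K * q ^ s - 1) = C₀ + 1 := div_mul_cancel₀ _ hη.ne'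
  obtain ⟨X, hX, hX₂⟩ := exists_forall_lt_abs_le x 2
  set D := B * 2 ^ s + X
  obtain ⟨n₀, hn₀⟩ := eventually_atTop.1 ((eventually_mul_pow_lt_one h0.le h1 K).and
    (eventually_supersolution h0 h1 hK.le hKρ (by linarith) hρ2 hs1 hB hBC D))
  obtain ⟨C, hC, hinit⟩ := exists_forall_lt_abs_le
    (fun n => (x n + B * ((n : ℝ) + 1) ^ s) / ((n : ℝ) * (n - 1)) ^ (ρ / 2)) n₀
  have dominated := le_of_le_binomialMean h0.le h1.le hK.le (fun n hn => (hn₀ n hn).1)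
    (fun n hn => ?_) (fun n _ => h n) (fun n hn => (hn₀ n hn).2 C hC)
  · refine ⟨C + D, by positivity, fun n => (dominated n).trans ?_⟩
    calc _ ≤ C * ((n : ℝ) + 1) ^ ρ - 0 + D * ((n : ℝ) + 1) ^ ρ := by
          gcongr
          · exact rpow_half_le_natCast_add_one_rpow (by linarith) n
          · positivity
          · exact le_mul_of_one_le_right (by positivity)
              (one_le_natCast_add_one_rpow (by linarith) n)
      _ = _ := by ring
  · have main_nonneg := mul_nonneg hC (Real.rpow_nonneg (natCast_mul_pred_nonneg n) (ρ / 2))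
    rcases lt_or_ge n 2 with hn2 | hn2
    · have : B * ((n : ℝ) + 1) ^ s ≤ B * 2 ^ s := by
        gcongr
        have : (n : ℝ) ≤ 1 := by exact_mod_cast Nat.lt_succ_iff.1 hn2
        linarith
      linarith [le_of_abs_le (hX₂ n hn2)]
    · have hn2' : (2 : ℝ) ≤ n := by exact_mod_cast hn2
      have hpos : 0 < ((n : ℝ) * (n - 1)) ^ (ρ / 2) := Real.rpow_pos_of_pos (by nlinarith) _
      have := (div_le_iff₀ hpos).1 (le_of_abs_le (hinit n hn))
      have : 0 ≤ D := by positivity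
      linarith

end CriticalExponent

/-! ### Exponential and Gaussian series -/

/-- The additive character `a ↦ exp (a X)` with values in power series. -/
noncomputable def expSeries : AddChar ℝ ℝ⟦X⟧ where
  toFun a := rescale a (exp ℝ)
  map_zero_eq_one' := by ext j; cases j <;> simp [coeff_one]
  map_add_eq_mul' a b := (exp_mul_exp_eq_exp_add a b).symm

lemma coeff_expSeries (a : ℝ) (j : ℕ) : coeff j (expSeries a) = a ^ j / j.factorial := by
  change coeff j (rescale a (exp ℝ)) = _
  simp [coeff_rescale, coeff_exp, div_eq_mul_inv]

@[simp]
lemma constantCoeff_expSeries (a : ℝ) : constantCoeff (expSeries a) = 1 := by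
  rw [← coeff_zero_eq_constantCoeff_apply, coeff_expSeries]
  simp

/-- The additive character `w ↦ exp (w X² / 2)`: the moment generating series of a centred
normal variable of variance `w`. -/
noncomputable def gaussSeries : AddChar ℝ ℝ⟦X⟧ where
  toFun w := expand 2 two_ne_zero (expSeries (w / 2))
  map_zero_eq_one' := by simp
  map_add_eq_mul' v w := by rw [add_div, AddChar.map_add_eq_mul, map_mul]

lemma gaussSeries_apply (w : ℝ) : gaussSeries w = expand 2 two_ne_zero (expSeries (w / 2)) :=
  rfl

lemma coeff_gaussSeries (w : ℝ) (j : ℕ) :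
    coeff j (gaussSeries w) = if Even j then (w / 2) ^ (j / 2) / (j / 2).factorial else 0 := by
  simp only [gaussSeries_apply, coeff_expand, coeff_expSeries, even_iff_two_dvd]

@[simp]
lemma constantCoeff_gaussSeries (w : ℝ) : constantCoeff (gaussSeries w) = 1 := by
  rw [← coeff_zero_eq_constantCoeff_apply, coeff_gaussSeries]
  simp

lemma addChar_sum_eq_prod {ι G N : Type*} [AddCommMonoid G] [CommMonoid N] (ψ : AddChar G N)
    (s : Finset ι) (f : ι → G) : ψ (∑ i ∈ s, f i) = ∏ i ∈ s, ψ (f i) :=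
  map_prod ψ.toMonoidHom (fun i => Multiplicative.ofAdd (f i)) s

/-! ### Truncated norms of power series -/

/-- The weighted `ℓ¹` norm `∑_{j ≤ m} |f_j| t^j` of the truncation of `f` at degree `m`. -/
noncomputable def truncNorm (m : ℕ) (t : ℝ) (f : ℝ⟦X⟧) : ℝ :=
  ∑ j ∈ range (m + 1), |coeff j f| * t ^ j

section TruncNorm

variable {m : ℕ} {t : ℝ}

lemma truncNorm_nonneg (ht : 0 ≤ t) (f : ℝ⟦X⟧) : 0 ≤ truncNorm m t f :=
  sum_nonneg fun _ _ => by positivity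

@[simp]
lemma truncNorm_zero : truncNorm m t 0 = 0 := by simp [truncNorm]

lemma truncNorm_eq_add_sum (f : ℝ⟦X⟧) :
    truncNorm m t f = |constantCoeff f| + ∑ j ∈ range m, |coeff (j + 1) f| * t ^ (j + 1) := by
  rw [truncNorm, sum_range_succ', add_comm]
  simp

@[simp]
lemma truncNorm_one : truncNorm m t 1 = 1 := by
  simp [truncNorm_eq_add_sum, coeff_one]

lemma truncNorm_sub_one {f : ℝ⟦X⟧} (hf : constantCoeff f = 1) :
    truncNorm m t (f - 1) = truncNorm m t f - 1 := by
  simp [truncNorm_eq_add_sum, coeff_one, hf]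

lemma truncNorm_add_le (ht : 0 ≤ t) (f g : ℝ⟦X⟧) :
    truncNorm m t (f + g) ≤ truncNorm m t f + truncNorm m t g := by
  simp only [truncNorm, ← sum_add_distrib, ← add_mul, map_add]
  gcongr
  exact abs_add_le _ _

lemma truncNorm_expect_le (ht : 0 ≤ t) {ι : Type*} (s : Finset ι) (f : ι → ℝ⟦X⟧) :
    truncNorm m t (𝔼 i ∈ s, f i) ≤ 𝔼 i ∈ s, truncNorm m t (f i) := by
  refine le_expect_of_subadditive truncNorm_zero (truncNorm_add_le ht) fun n f => ?_
  simp [truncNorm, NNRat.smul_def, abs_mul, mul_sum, mul_assoc]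

lemma truncNorm_mul_le (ht : 0 ≤ t) (f g : ℝ⟦X⟧) :
    truncNorm m t (f * g) ≤ truncNorm m t f * truncNorm m t g := by
  let F : ℕ × ℕ → ℝ := fun p => |coeff p.1 f| * t ^ p.1 * (|coeff p.2 g| * t ^ p.2)
  calc truncNorm m t (f * g) ≤ ∑ j ∈ range (m + 1), ∑ p ∈ antidiagonal j, F p := by
        refine sum_le_sum fun j _ => ?_
        rw [coeff_mul]
        refine (mul_le_mul_of_nonneg_right (abs_sum_le_sum_abs _ _) (by positivity)).trans_eq ?_
        rw [sum_mul]
        refine sum_congr rfl fun p hp => ?_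
        rw [abs_mul, ← HasAntidiagonal.mem_antidiagonal.1 hp, pow_add]
        ring
    _ = ∑ j ∈ range (m + 1),
          ∑ p ∈ range (m + 1) ×ˢ range (m + 1) with p.1 + p.2 = j, F p := by
        refine sum_congr rfl fun j hj => sum_congr ?_ fun _ _ => rfl
        ext p
        simp only [HasAntidiagonal.mem_antidiagonal, mem_filter, mem_product, mem_range] at hj ⊢
        lia
    _ ≤ ∑ p ∈ range (m + 1) ×ˢ range (m + 1), F p :=
        sum_fiberwise_le_sum_of_sum_fiber_nonneg fun _ _ => sum_nonneg fun _ _ => by positivity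
    _ = truncNorm m t f * truncNorm m t g := by
        rw [sum_product, truncNorm, truncNorm, sum_mul_sum]

lemma truncNorm_prod_le (ht : 0 ≤ t) {ι : Type*} (s : Finset ι) {f : ι → ℝ⟦X⟧} {B : ℝ}
    (hB : ∀ i ∈ s, truncNorm m t (f i) ≤ B) : truncNorm m t (∏ i ∈ s, f i) ≤ B ^ #s := by
  induction s using Finset.cons_induction with
  | empty => simp
  | cons a s ha ih =>
    rw [forall_mem_cons] at hB
    rw [prod_cons, card_cons, pow_succ']
    exact (truncNorm_mul_le ht _ _).trans
      (mul_le_mul hB.1 (ih hB.2) (truncNorm_nonneg ht _) ((truncNorm_nonneg ht _).trans hB.1))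

lemma truncNorm_prod_sub_prod_le (ht : 0 ≤ t) {ι : Type*} (s : Finset ι) {f g : ι → ℝ⟦X⟧}
    {B ε : ℝ} (hB : 1 ≤ B) (hf : ∀ i ∈ s, truncNorm m t (f i) ≤ B)
    (hg : ∀ i ∈ s, truncNorm m t (g i) ≤ B) (h : ∀ i ∈ s, truncNorm m t (f i - g i) ≤ ε) :
    truncNorm m t (∏ i ∈ s, f i - ∏ i ∈ s, g i) ≤ #s * B ^ #s * ε := by
  induction s using Finset.cons_induction with
  | empty => simp
  | cons a s ha ih =>
    rw [forall_mem_cons] at hf hg h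
    have hε : 0 ≤ ε := (truncNorm_nonneg ht _).trans h.1
    have : 0 ≤ B := zero_le_one.trans hB
    have telescope : ∏ i ∈ cons a s ha, f i - ∏ i ∈ cons a s ha, g i
        = f a * (∏ i ∈ s, f i - ∏ i ∈ s, g i) + (f a - g a) * ∏ i ∈ s, g i := by
      rw [prod_cons, prod_cons]
      ring
    calc truncNorm m t (∏ i ∈ cons a s ha, f i - ∏ i ∈ cons a s ha, g i)
        ≤ truncNorm m t (f a) * truncNorm m t (∏ i ∈ s, f i - ∏ i ∈ s, g i)
          + truncNorm m t (f a - g a) * truncNorm m t (∏ i ∈ s, g i) := by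
          rw [telescope]
          exact (truncNorm_add_le ht _ _).trans
            (add_le_add (truncNorm_mul_le ht _ _) (truncNorm_mul_le ht _ _))
      _ ≤ B * (#s * B ^ #s * ε) + ε * B ^ (#s + 1) := by
          have prod_le : truncNorm m t (∏ i ∈ s, g i) ≤ B ^ (#s + 1) :=
            (truncNorm_prod_le ht s hg.2).trans (pow_le_pow_right₀ hB (Nat.le_succ _))
          gcongr
          · exact truncNorm_nonneg ht _
          · exact hf.1
          · exact ih hf.2 hg.2 h.2
          · exact truncNorm_nonneg ht _
          · exact h.1
      _ = #(cons a s ha) * B ^ #(cons a s ha) * ε := by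
          rw [card_cons]
          push_cast
          ring

lemma abs_coeff_mul_pow_le_truncNorm (ht : 0 ≤ t) (f : ℝ⟦X⟧) {j : ℕ} (hj : j ≤ m) :
    |coeff j f| * t ^ j ≤ truncNorm m t f :=
  single_le_sum (f := fun j => |coeff j f| * t ^ j) (fun _ _ => by positivity)
    (mem_range.2 (Nat.lt_succ_of_le hj))

lemma truncNorm_expand_two_le (f : ℝ⟦X⟧) :
    truncNorm m t (expand 2 two_ne_zero f) ≤ truncNorm m (t ^ 2) f := by
  calc truncNorm m t (expand 2 two_ne_zero f)
      = ∑ j ∈ range (m + 1) with 2 ∣ j, |coeff (j / 2) f| * (t ^ 2) ^ (j / 2) := by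
        rw [truncNorm, sum_filter]
        refine sum_congr rfl fun j _ => ?_
        rw [coeff_expand]
        split_ifs with hj
        · rw [← pow_mul, Nat.mul_div_cancel' hj]
        · simp
    _ = ∑ i ∈ (range (m + 1)).filter (2 ∣ ·) |>.image (· / 2), |coeff i f| * (t ^ 2) ^ i := by
        refine (sum_image (f := fun i => |coeff i f| * (t ^ 2) ^ i) fun i hi j hj hij => ?_).symm
        simp only [coe_filter, Set.mem_ofPred_eq] at hi hj hij
        lia
    _ ≤ truncNorm m (t ^ 2) f := by
        refine sum_le_sum_of_subset_of_nonneg (fun i hi => ?_) fun _ _ _ => by positivity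
        simp only [mem_image, mem_filter, mem_range] at hi ⊢
        lia

lemma truncNorm_expSeries_le (ht : 0 ≤ t) (a : ℝ) :
    truncNorm m t (expSeries a) ≤ Real.exp (|a| * t) := by
  refine le_of_eq_of_le ?_ (Real.sum_le_exp_of_nonneg (x := |a| * t) (by positivity) (m + 1))
  refine sum_congr rfl fun j _ => ?_
  rw [coeff_expSeries, abs_div, abs_pow, Nat.abs_cast, mul_pow]
  ring

lemma truncNorm_expSeries_sub_one_le (ht : 0 ≤ t) (a : ℝ) :
    truncNorm m t (expSeries a - 1) ≤ ∑ j ∈ range m, |a| ^ (j + 1) * t ^ (j + 1) := by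
  rw [truncNorm_sub_one (constantCoeff_expSeries a), truncNorm_eq_add_sum,
    constantCoeff_expSeries, abs_one, add_sub_cancel_left]
  gcongr with j
  rw [coeff_expSeries, abs_div, abs_pow, Nat.abs_cast]
  exact div_le_self (by positivity) (mod_cast Nat.factorial_pos _)

lemma truncNorm_gaussSeries_le (w : ℝ) :
    truncNorm m t (gaussSeries w) ≤ Real.exp (|w| * t ^ 2) := by
  refine (truncNorm_expand_two_le _).trans ((truncNorm_expSeries_le (by positivity) _).trans ?_)
  rw [abs_div, abs_two]
  gcongr
  exact half_le_self (abs_nonneg w)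

lemma truncNorm_gaussSeries_sub_le (ht : 0 ≤ t) {w w' B : ℝ} (hw : |w| * t ^ 2 ≤ B)
    (hw' : |w'| * t ^ 2 ≤ B) :
    truncNorm m t (gaussSeries w - gaussSeries w')
      ≤ Real.exp (3 * B) * (|w - w'| * t ^ 2) := by
  set y := |w - w'| * t ^ 2
  have y_le : y ≤ 2 * B := by
    calc y ≤ (|w| + |w'|) * t ^ 2 := mul_le_mul_of_nonneg_right (abs_sub _ _) (sq_nonneg t)
      _ ≤ 2 * B := by linarith
  have increment : truncNorm m t (gaussSeries (w - w') - 1) ≤ y * Real.exp (2 * B) := by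
    rw [truncNorm_sub_one (constantCoeff_gaussSeries _)]
    have mul_exp : Real.exp y * (1 - y) ≤ 1 := by
      calc Real.exp y * (1 - y) ≤ Real.exp y * Real.exp (-y) := by
            gcongr
            linarith [Real.add_one_le_exp (-y)]
        _ = 1 := by rw [← Real.exp_add, add_neg_cancel, Real.exp_zero]
    calc truncNorm m t (gaussSeries (w - w')) - 1 ≤ y * Real.exp y := by
          linarith [truncNorm_gaussSeries_le (m := m) (t := t) (w - w')]
      _ ≤ y * Real.exp (2 * B) := by gcongr
  calc truncNorm m t (gaussSeries w - gaussSeries w')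
      = truncNorm m t (gaussSeries w' * (gaussSeries (w - w') - 1)) := by
        rw [mul_sub, ← AddChar.map_add_eq_mul, add_sub_cancel, mul_one]
    _ ≤ Real.exp B * (y * Real.exp (2 * B)) := by
        refine (truncNorm_mul_le ht _ _).trans ?_
        gcongr
        · exact truncNorm_nonneg ht _
        · exact (truncNorm_gaussSeries_le w').trans (Real.exp_le_exp.2 hw')
    _ = Real.exp (3 * B) * y := by
        rw [mul_left_comm, ← Real.exp_add, mul_comm]
        ring_nf

end TruncNorm

lemma coeff_expect {ι : Type*} (j : ℕ) (s : Finset ι) (f : ι → ℝ⟦X⟧) :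
    coeff j (𝔼 i ∈ s, f i) = 𝔼 i ∈ s, coeff j (f i) :=
  map_expect ((coeff j).restrictScalars ℚ≥0) f s

/-! ### Perturbing the top coefficient -/

/-- `f = g + x X^m` modulo `X^(m+1)`. For series with constant coefficient `1` the top
perturbation `x` is additive under products, which is how recursions for single moments are
extracted from recursions for generating series. -/
def IsTopPerturbation (m : ℕ) (f g : ℝ⟦X⟧) (x : ℝ) : Prop :=
  X ^ (m + 1) ∣ f - (g + C x * X ^ m)

namespace IsTopPerturbation

variable {m : ℕ} {f g f' g' : ℝ⟦X⟧} {x x' : ℝ}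

lemma of_coeff_eq (h : ∀ j < m, coeff j f = coeff j g) (hx : coeff m f = coeff m g + x) :
    IsTopPerturbation m f g x := by
  refine X_pow_dvd_iff.2 fun j hj => ?_
  rw [map_sub, map_add, coeff_C_mul, coeff_X_pow]
  split_ifs with hjm
  · rw [hjm, hx]
    ring
  · rw [h j (by lia)]
    ring

lemma coeff_eq (h : IsTopPerturbation m f g x) : coeff m f = coeff m g + x := by
  have := X_pow_dvd_iff.1 h m (Nat.lt_succ_self m)
  rw [map_sub, map_add, coeff_C_mul, coeff_X_pow_self] at this
  linarith

lemma coeff_eq_of_lt (h : IsTopPerturbation m f g x) {j : ℕ} (hj : j < m) :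
    coeff j f = coeff j g := by
  have := X_pow_dvd_iff.1 h j (by lia)
  rw [map_sub, map_add, coeff_C_mul, coeff_X_pow, if_neg hj.ne] at this
  linarith

lemma refl (m : ℕ) (f : ℝ⟦X⟧) : IsTopPerturbation m f f 0 := by
  simp [IsTopPerturbation]

lemma sub_C_mul_X_pow (m : ℕ) (f : ℝ⟦X⟧) (x : ℝ) :
    IsTopPerturbation m f (f - C x * X ^ m) x := by
  simp [IsTopPerturbation]

lemma mul (hm : 1 ≤ m) (h : IsTopPerturbation m f g x) (h' : IsTopPerturbation m f' g' x')
    (hg : constantCoeff g = 1) (hg' : constantCoeff g' = 1) :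
    IsTopPerturbation m (f * f') (g * g') (x + x') := by
  obtain ⟨k, rfl⟩ := Nat.exists_eq_add_of_le' hm
  obtain ⟨a, ha⟩ := h
  obtain ⟨b, hb⟩ := h'
  obtain ⟨u, hu⟩ : X ∣ g - 1 := X_dvd_iff.2 (by simp [hg])
  obtain ⟨u', hu'⟩ : X ∣ g' - 1 := X_dvd_iff.2 (by simp [hg'])
  have f_eq : f = g + C x * X ^ (k + 1) + X ^ (k + 1 + 1) * a := by rw [← ha]; ring
  have f'_eq : f' = g' + C x' * X ^ (k + 1) + X ^ (k + 1 + 1) * b := by rw [← hb]; ring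
  have g_eq : g = 1 + X * u := by rw [← hu]; ring
  have g'_eq : g' = 1 + X * u' := by rw [← hu']; ring
  refine ⟨u * C x' + u' * C x + C x * C x' * X ^ k + a * f' + (g + C x * X ^ (k + 1)) * b, ?_⟩
  rw [map_add, f_eq, f'_eq, g_eq, g'_eq]
  ring

lemma prod (hm : 1 ≤ m) {ι : Type*} (s : Finset ι) {f g : ι → ℝ⟦X⟧} {x : ι → ℝ}
    (h : ∀ i ∈ s, IsTopPerturbation m (f i) (g i) (x i))
    (hg : ∀ i ∈ s, constantCoeff (g i) = 1) :
    IsTopPerturbation m (∏ i ∈ s, f i) (∏ i ∈ s, g i) (∑ i ∈ s, x i) := by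
  induction s using Finset.cons_induction with
  | empty => simpa using refl m 1
  | cons a s ha ih =>
    rw [forall_mem_cons] at h hg
    rw [prod_cons, prod_cons, sum_cons]
    refine h.1.mul hm (ih h.2 hg.2) hg.1 ?_
    rw [map_prod]
    exact prod_eq_one hg.2

lemma pow (hm : 1 ≤ m) (h : IsTopPerturbation m f g x) (hg : constantCoeff g = 1) (k : ℕ) :
    IsTopPerturbation m (f ^ k) (g ^ k) (k * x) := by
  simpa using prod hm (range k) (fun _ _ => h) fun _ _ => hg

lemma expect {ι : Type*} {s : Finset ι} {f g : ι → ℝ⟦X⟧} {x : ι → ℝ}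
    (h : ∀ i ∈ s, IsTopPerturbation m (f i) (g i) (x i)) :
    IsTopPerturbation m (𝔼 i ∈ s, f i) (𝔼 i ∈ s, g i) (𝔼 i ∈ s, x i) := by
  refine of_coeff_eq (fun j hj => ?_) ?_
  · rw [coeff_expect, coeff_expect]
    exact expect_congr rfl fun i hi => (h i hi).coeff_eq_of_lt hj
  · rw [coeff_expect, coeff_expect, ← expect_add_distrib]
    exact expect_congr rfl fun i hi => (h i hi).coeff_eq

end IsTopPerturbation

/-! ### Colourings and moment systems -/

/-- The number of points of colour `a` in the colouring `c`. -/
def fiberCard {n A : ℕ} (c : Fin n → Fin A) (a : Fin A) : ℕ := Fintype.card {l // c l = a}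

section Colouring

variable {n A : ℕ}

lemma fiberCard_le (c : Fin n → Fin A) (a : Fin A) : fiberCard c a ≤ n :=
  (Fintype.card_subtype_le _).trans_eq (Fintype.card_fin n)

lemma sum_fiberCard (c : Fin n → Fin A) : ∑ a, fiberCard c a = n := by
  simpa [fiberCard] using Fintype.card_congr (Equiv.sigmaFiberEquiv c)

lemma fiberCard_cons (b : Fin A) (c : Fin n → Fin A) (a : Fin A) :
    fiberCard (Fin.cons b c : Fin (n + 1) → Fin A) a
      = fiberCard c a + if b = a then 1 else 0 := by
  simp only [fiberCard, Fintype.card_subtype, card_filter, Fin.sum_univ_succ, Fin.cons_zero,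
    Fin.cons_succ, add_comm]

lemma expect_colouring_succ (F : (Fin (n + 1) → Fin A) → ℝ) :
    𝔼 c, F c = 𝔼 b, 𝔼 c : Fin n → Fin A, F (Fin.cons b c) := by
  rw [← Fintype.expect_equiv (Fin.consEquiv fun _ => Fin A)
    (fun p => F (Fin.cons p.1 p.2)) F fun _ => rfl, ← univ_product_univ, expect_product]

lemma expect_fiberCard [NeZero A] (n : ℕ) (a : Fin A) (f : ℕ → ℝ) :
    𝔼 c : Fin n → Fin A, f (fiberCard c a) = binomialMean (A : ℝ)⁻¹ n f := by
  have hA : (A : ℝ) ≠ 0 := NeZero.ne _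
  induction n generalizing f with
  | zero => simp [binomialMean, fiberCard]
  | succ n ih =>
    have average_of_one_color (x y : ℝ) :
        𝔼 b : Fin A, (if b = a then x else y) = (A : ℝ)⁻¹ * x + (1 - (A : ℝ)⁻¹) * y := by
      rw [Fintype.expect_eq_sum_div_card, Fintype.card_fin,
        sum_congr rfl fun b _ => show (if b = a then x else y) = y + if b = a then x - y else 0 by
          split_ifs <;> ring, sum_add_distrib, sum_ite_eq' univ a fun _ => x - y]
      simp only [sum_const, card_univ, Fintype.card_fin, nsmul_eq_mul, mem_univ, if_true]
      field_simp
      ring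
    rw [expect_colouring_succ, binomialMean_succ, ← ih, ← ih, ← average_of_one_color]
    refine expect_congr rfl fun b _ => ?_
    simp only [fiberCard_cons]
    split_ifs <;> rfl

lemma expect_sum_fiberCard [NeZero A] (n : ℕ) (f : ℕ → ℝ) :
    𝔼 c : Fin n → Fin A, ∑ a, f (fiberCard c a) = A * binomialMean (A : ℝ)⁻¹ n f := by
  simp [expect_sum_comm, expect_fiberCard]

end Colouring

/-- The toll of a node: it belongs to the trie as soon as two labelings reach it. -/
noncomputable def toll (n : ℕ) : ℝ := if 2 ≤ n then 1 else 0

/-- The mean of the variable with moment generating series `R n`. -/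
noncomputable def seriesMean (R : ℕ → ℝ⟦X⟧) (n : ℕ) : ℝ := coeff 1 (R n)

/-- The generating series of the central moments of the variable with moment generating
series `R n`. -/
noncomputable def centredSeries (R : ℕ → ℝ⟦X⟧) (n : ℕ) : ℝ⟦X⟧ :=
  expSeries (-seriesMean R n) * R n

/-- The variance of the variable with moment generating series `R n`. -/
noncomputable def seriesVariance (R : ℕ → ℝ⟦X⟧) (n : ℕ) : ℝ := 2 * coeff 2 (centredSeries R n)

/-- The toll of the recursion for the centred series, once the `n` labelings have been
distributed according to the letters `c` they carry at one of the `M` children. -/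
noncomputable def centredToll (A M : ℕ) (R : ℕ → ℝ⟦X⟧) (n : ℕ) (c : Fin n → Fin A) : ℝ :=
  ∑ a, seriesMean R (fiberCard c a) - (seriesMean R n - toll n) / M

/-- The moment generating series `R n` of trie sizes: the `n` labelings are distributed by
their letter at each of the `M` children of the root, independently, and the sizes of the
resulting subtries add up. The inequalities say that the alphabet is larger than the arity. -/
structure IsMomentSystem (A M : ℕ) (R : ℕ → ℝ⟦X⟧) : Prop where
  one_lt_arity : 1 < M
  arity_lt_alphabet : M < A
  constantCoeff_eq_one (n : ℕ) : constantCoeff (R n) = 1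
  eq_mul_pow (n : ℕ) :
    R n = expSeries (toll n) * (𝔼 c : Fin n → Fin A, ∏ a, R (fiberCard c a)) ^ M
  variance_nonneg (n : ℕ) : 0 ≤ seriesVariance R n

lemma constantCoeff_expect_eq_one {ι : Type*} [Fintype ι] [Nonempty ι] {f : ι → ℝ⟦X⟧}
    (h : ∀ i, constantCoeff (f i) = 1) : constantCoeff (𝔼 i, f i) = 1 := by
  simp [← coeff_zero_eq_constantCoeff_apply, coeff_expect, h]

namespace IsMomentSystem

variable {A M : ℕ} {R : ℕ → ℝ⟦X⟧}

lemma neZero_arity (S : IsMomentSystem A M R) : NeZero M :=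
  ⟨(zero_lt_one.trans S.one_lt_arity).ne'⟩

lemma neZero_alphabet (S : IsMomentSystem A M R) : NeZero A :=
  ⟨(zero_lt_one.trans (S.one_lt_arity.trans S.arity_lt_alphabet)).ne'⟩

lemma seriesMean_eq_add (S : IsMomentSystem A M R) (n : ℕ) :
    seriesMean R n = toll n + M * A * binomialMean (A : ℝ)⁻¹ n (seriesMean R) := by
  have := S.neZero_alphabet
  have linear_part (k : ℕ) : IsTopPerturbation 1 (R k) 1 (seriesMean R k) :=
    .of_coeff_eq (by simp [S.constantCoeff_eq_one]) (by simp [seriesMean, coeff_one])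
  have linear_part_toll : IsTopPerturbation 1 (expSeries (toll n)) 1 (toll n) :=
    .of_coeff_eq (by simp) (by simp [coeff_one, coeff_expSeries])
  have average : IsTopPerturbation 1 (𝔼 c : Fin n → Fin A, ∏ a, R (fiberCard c a)) 1
      (A * binomialMean (A : ℝ)⁻¹ n (seriesMean R)) := by
    have := IsTopPerturbation.expect (s := univ) fun (c : Fin n → Fin A) _ =>
      IsTopPerturbation.prod le_rfl univ (fun a _ => linear_part (fiberCard c a)) (by simp)
    simpa [expect_sum_fiberCard] using this
  have power := average.pow le_rfl (by simp) M
  have := (linear_part_toll.mul le_rfl power (by simp) (by simp)).coeff_eq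
  rw [← S.eq_mul_pow n] at this
  simpa [coeff_one, mul_assoc, seriesMean] using this

lemma constantCoeff_centredSeries (S : IsMomentSystem A M R) (n : ℕ) :
    constantCoeff (centredSeries R n) = 1 := by
  simp [centredSeries, S.constantCoeff_eq_one]

lemma coeff_one_centredSeries (S : IsMomentSystem A M R) (n : ℕ) :
    coeff 1 (centredSeries R n) = 0 := by
  have : HasAntidiagonal.antidiagonal 1 = {((0 : ℕ), (1 : ℕ)), (1, 0)} := rfl
  rw [centredSeries, coeff_mul, this]
  simp [coeff_expSeries, S.constantCoeff_eq_one, seriesMean]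

lemma centredSeries_eq_pow (S : IsMomentSystem A M R) (n : ℕ) :
    centredSeries R n = (𝔼 c : Fin n → Fin A,
      expSeries (centredToll A M R n c) * ∏ a, centredSeries R (fiberCard c a)) ^ M := by
  have := S.neZero_arity
  have hM : (M : ℝ) ≠ 0 := NeZero.ne _
  set d := (seriesMean R n - toll n) / M with hd
  have centring (c : Fin n → Fin A) :
      expSeries (centredToll A M R n c) * ∏ a, centredSeries R (fiberCard c a)
        = expSeries (-d) * ∏ a, R (fiberCard c a) := by
    simp only [centredSeries]
    rw [prod_mul_distrib, ← addChar_sum_eq_prod, ← mul_assoc, ← AddChar.map_add_eq_mul,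
      centredToll, sum_neg_distrib]
    congr 2
    ring
  simp only [centring]
  rw [← mul_expect, mul_pow, ← AddChar.map_nsmul_eq_pow, centredSeries]
  conv_lhs => rw [S.eq_mul_pow n]
  rw [← mul_assoc, ← AddChar.map_add_eq_mul, nsmul_eq_mul, hd]
  congr 2
  field_simp
  ring

lemma expect_centredToll (S : IsMomentSystem A M R) (n : ℕ) :
    𝔼 c, centredToll A M R n c = 0 := by
  have := S.neZero_alphabet
  have := S.neZero_arity
  have hM : (M : ℝ) ≠ 0 := NeZero.ne _
  simp only [centredToll]
  rw [expect_sub_distrib, expect_sum_fiberCard, Fintype.expect_const, S.seriesMean_eq_add n]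
  field_simp
  ring

lemma isTopPerturbation_centredSeries (S : IsMomentSystem A M R) {m : ℕ}
    (hm : 1 ≤ m) {x : ℕ → ℝ} {H : ℕ → ℝ⟦X⟧}
    (h : ∀ k, IsTopPerturbation m (centredSeries R k) (H k) (x k))
    (hH : ∀ k, constantCoeff (H k) = 1) (n : ℕ) :
    IsTopPerturbation m (centredSeries R n)
      ((𝔼 c : Fin n → Fin A, expSeries (centredToll A M R n c) * ∏ a, H (fiberCard c a)) ^ M)
      (M * A * binomialMean (A : ℝ)⁻¹ n x) := by
  have := S.neZero_alphabet
  have average := IsTopPerturbation.expect (s := univ) fun (c : Fin n → Fin A) _ =>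
    (IsTopPerturbation.refl m (expSeries (centredToll A M R n c))).mul hm
      (.prod hm univ (fun a _ => h (fiberCard c a)) fun a _ => hH _)
      (constantCoeff_expSeries _) (by simp [map_prod, hH])
  simp only [zero_add] at average
  rw [expect_sum_fiberCard] at average
  have power := average.pow hm (constantCoeff_expect_eq_one (by simp [map_prod, hH])) M
  rwa [← S.centredSeries_eq_pow n, ← mul_assoc] at power

lemma seriesVariance_eq_add (S : IsMomentSystem A M R) (n : ℕ) :
    seriesVariance R n = M * A * binomialMean (A : ℝ)⁻¹ n (seriesVariance R)
      + M * 𝔼 c, centredToll A M R n c ^ 2 := by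
  have := S.neZero_alphabet
  have quadratic_part (k : ℕ) :
      IsTopPerturbation 2 (centredSeries R k) 1 (1 / 2 * seriesVariance R k) := by
    refine .of_coeff_eq (fun j hj => ?_) (by simp [seriesVariance, coeff_one])
    interval_cases j
    · simp [S.constantCoeff_centredSeries]
    · simp [S.coeff_one_centredSeries, coeff_one]
  have quadratic_part_toll :
      IsTopPerturbation 2 (𝔼 c : Fin n → Fin A, expSeries (centredToll A M R n c)) 1
        (1 / 2 * 𝔼 c, centredToll A M R n c ^ 2) := by
    refine .of_coeff_eq (fun j hj => ?_) ?_
    · interval_cases j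
      · simp [coeff_expect]
      · simp [coeff_expect, coeff_expSeries, coeff_one, S.expect_centredToll]
    · simp [coeff_expect, coeff_expSeries, coeff_one, mul_expect, div_eq_inv_mul]
  have recursion :=
    (S.isTopPerturbation_centredSeries one_le_two quadratic_part (by simp) n).coeff_eq
  simp only [prod_const_one, mul_one] at recursion
  rw [(quadratic_part_toll.pow one_le_two (by simp) M).coeff_eq, binomialMean_const_mul]
    at recursion
  rw [seriesVariance, recursion]
  simp only [one_pow, coeff_one]
  norm_num
  ring

end IsMomentSystem

/-! ### Regularity of the mean -/

/-- The exponent `ρ = 1 + log_A M` of growth of the variance. -/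
noncomputable def varianceExponent (A M : ℕ) : ℝ := 1 + Real.logb A M

/-- The exponent of growth of the centred toll; any value strictly between `ρ - 1` and `ρ / 2`
that is at least `1 / 2` would do. -/
noncomputable def tollExponent (A M : ℕ) : ℝ := (1 + Real.logb A M ^ 2) / 2

section LogRatio

variable {A M : ℕ}

lemma logb_natCast_pos (hM : 1 < M) (hMA : M < A) : 0 < Real.logb A M :=
  Real.logb_pos (mod_cast hM.trans hMA) (mod_cast hM)

lemma logb_natCast_lt_one (hM : 1 < M) (hMA : M < A) : Real.logb A M < 1 := by
  rw [Real.logb_lt_iff_lt_rpow (mod_cast hM.trans hMA) (mod_cast zero_lt_one.trans hM),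
    Real.rpow_one]
  exact mod_cast hMA

lemma mul_inv_rpow_eq (hM : 0 < M) (hA : 1 < A) (s : ℝ) :
    M * A * (A : ℝ)⁻¹ ^ s = (A : ℝ) ^ (varianceExponent A M - s) := by
  have hA1 : (1 : ℝ) < A := mod_cast hA
  have hA0 : (0 : ℝ) < A := zero_lt_one.trans hA1
  rw [varianceExponent, Real.rpow_sub hA0, Real.rpow_add hA0, Real.rpow_one,
    Real.rpow_logb hA0 hA1.ne' (mod_cast hM), Real.inv_rpow hA0.le, mul_comm (M : ℝ) A,
    div_eq_mul_inv]

end LogRatio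

namespace IsMomentSystem

variable {A M : ℕ} {R : ℕ → ℝ⟦X⟧} {s : ℝ}

lemma one_lt_alphabet (S : IsMomentSystem A M R) : 1 < A :=
  S.one_lt_arity.trans S.arity_lt_alphabet

lemma inv_alphabet_pos (S : IsMomentSystem A M R) : 0 < (A : ℝ)⁻¹ :=
  inv_pos.2 (mod_cast zero_lt_one.trans S.one_lt_alphabet)

lemma inv_alphabet_lt_one (S : IsMomentSystem A M R) : (A : ℝ)⁻¹ < 1 :=
  inv_lt_one_of_one_lt₀ (mod_cast S.one_lt_alphabet)

lemma one_lt_varianceExponent (S : IsMomentSystem A M R) : 1 < varianceExponent A M :=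
  lt_add_of_pos_right 1 (logb_natCast_pos S.one_lt_arity S.arity_lt_alphabet)

lemma varianceExponent_lt_two (S : IsMomentSystem A M R) : varianceExponent A M < 2 := by
  have := logb_natCast_lt_one S.one_lt_arity S.arity_lt_alphabet
  rw [varianceExponent]
  linarith

lemma half_lt_tollExponent (S : IsMomentSystem A M R) : 1 / 2 < tollExponent A M := by
  have := logb_natCast_pos S.one_lt_arity S.arity_lt_alphabet
  rw [tollExponent]
  nlinarith

lemma tollExponent_lt_one (S : IsMomentSystem A M R) : tollExponent A M < 1 := by
  have := logb_natCast_pos S.one_lt_arity S.arity_lt_alphabet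
  have := logb_natCast_lt_one S.one_lt_arity S.arity_lt_alphabet
  rw [tollExponent]
  nlinarith

lemma two_mul_tollExponent_lt (S : IsMomentSystem A M R) :
    2 * tollExponent A M < varianceExponent A M := by
  have := logb_natCast_pos S.one_lt_arity S.arity_lt_alphabet
  have := logb_natCast_lt_one S.one_lt_arity S.arity_lt_alphabet
  rw [tollExponent, varianceExponent]
  nlinarith

lemma varianceExponent_lt_tollExponent_add_one (S : IsMomentSystem A M R) :
    varianceExponent A M < tollExponent A M + 1 := by
  have := logb_natCast_lt_one S.one_lt_arity S.arity_lt_alphabet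
  rw [tollExponent, varianceExponent]
  nlinarith

lemma mul_inv_rpow_varianceExponent (S : IsMomentSystem A M R) :
    M * A * (A : ℝ)⁻¹ ^ varianceExponent A M = 1 := by
  rw [mul_inv_rpow_eq (zero_lt_one.trans S.one_lt_arity) S.one_lt_alphabet, sub_self,
    Real.rpow_zero]

lemma mul_inv_rpow_lt_one (S : IsMomentSystem A M R) (hs : varianceExponent A M < s) :
    M * A * (A : ℝ)⁻¹ ^ s < 1 := by
  rw [mul_inv_rpow_eq (zero_lt_one.trans S.one_lt_arity) S.one_lt_alphabet]
  exact Real.rpow_lt_one_of_one_lt_of_neg (mod_cast S.one_lt_alphabet) (sub_neg.2 hs)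

end IsMomentSystem

lemma fwdDiff_const_mul_binomialMean (q K : ℝ) (f : ℕ → ℝ) (n : ℕ) :
    fwdDiff 1 (fun k => K * binomialMean q k f) n = K * q * binomialMean q n (fwdDiff 1 f) := by
  rw [fwdDiff, ← mul_sub, binomialMean_succ_sub, mul_assoc]
  rfl

lemma fwdDiff_eq_add_binomialMean {q K : ℝ} {x b : ℕ → ℝ}
    (h : ∀ n, x n = b n + K * binomialMean q n x) (n : ℕ) :
    fwdDiff 1 x n = fwdDiff 1 b n + K * q * binomialMean q n (fwdDiff 1 x) := by
  conv_lhs => rw [show x = b + fun k => K * binomialMean q k x from funext h]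
  rw [fwdDiff_add, Pi.add_apply, fwdDiff_const_mul_binomialMean]

/-- The error of the first order Newton expansion of `f` at `k`. -/
noncomputable def newtonRemainder (f : ℕ → ℝ) (k l : ℕ) : ℝ :=
  f l - f k - (l - k) * fwdDiff 1 f k

section Newton

variable {f : ℕ → ℝ} {B : ℝ} {k l : ℕ}

lemma abs_sub_le_of_abs_fwdDiff_le
    (h : ∀ j, min k l ≤ j → j < max k l → |fwdDiff 1 f j| ≤ B) :
    |f l - f k| ≤ B * |(l : ℝ) - k| := by
  wlog hkl : k ≤ l generalizing k l
  · rw [abs_sub_comm, abs_sub_comm (l : ℝ)]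
    exact this (by rwa [min_comm, max_comm]) (le_of_not_ge hkl)
  rw [min_eq_left hkl, max_eq_right hkl] at h
  have telescope := dist_le_Ico_sum_of_dist_le (f := f) hkl (d := fun _ => B) fun hk hl => by
    rw [dist_comm]
    exact h _ hk hl
  rw [dist_comm, Real.dist_eq, sum_const, Nat.card_Ico, nsmul_eq_mul, Nat.cast_sub hkl] at telescope
  rwa [abs_of_nonneg (sub_nonneg.2 (Nat.cast_le.2 hkl)), mul_comm]

lemma abs_newtonRemainder_le (h : ∀ j, min k l ≤ j → |fwdDiff 1 (fwdDiff 1 f) j| ≤ B) :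
    |newtonRemainder f k l| ≤ B * (l - k) ^ 2 := by
  have hB : 0 ≤ B := (abs_nonneg _).trans (h _ le_rfl)
  have slope_close (j : ℕ) (hj : min k l ≤ j) (hj' : j < max k l) :
      |fwdDiff 1 (fun i => f i - i * fwdDiff 1 f k) j| ≤ B * |(l : ℝ) - k| := by
    have slope_eq : fwdDiff 1 (fun i => f i - i * fwdDiff 1 f k) j
        = fwdDiff 1 f j - fwdDiff 1 f k := by
      simp only [fwdDiff]
      push_cast
      ring
    have j_near : |(j : ℝ) - k| ≤ |(l : ℝ) - k| := by
      rcases le_total k l with hkl | hkl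
      · rw [min_eq_left hkl] at hj
        rw [max_eq_right hkl] at hj'
        have : (k : ℝ) ≤ j := mod_cast hj
        have : (j : ℝ) ≤ l := mod_cast hj'.le
        exact abs_le_abs_of_nonneg (by linarith) (by linarith)
      · rw [min_eq_right hkl] at hj
        rw [max_eq_left hkl] at hj'
        have : (l : ℝ) ≤ j := mod_cast hj
        have : (j : ℝ) ≤ k := mod_cast hj'.le
        exact abs_le_abs_of_nonpos (by linarith) (by linarith)
    rw [slope_eq]
    calc |fwdDiff 1 f j - fwdDiff 1 f k| ≤ B * |(j : ℝ) - k| :=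
          abs_sub_le_of_abs_fwdDiff_le fun i hi _ => h i (le_trans (by lia) hi)
      _ ≤ B * |(l : ℝ) - k| := by gcongr
  calc |newtonRemainder f k l|
      = |(f l - l * fwdDiff 1 f k) - (f k - k * fwdDiff 1 f k)| := by
        rw [newtonRemainder]
        ring_nf
    _ ≤ B * |(l : ℝ) - k| * |(l : ℝ) - k| := abs_sub_le_of_abs_fwdDiff_le slope_close
    _ = B * (l - k) ^ 2 := by rw [mul_assoc, abs_mul_abs_self, sq]

end Newton

/-- The squared deviation of `l` from `n / A`, normalised so that all its moments are bounded
when `l` is binomial with mean `n / A`. -/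
noncomputable def sqDeviation (A n l : ℕ) : ℝ := (l - (n / A : ℕ)) ^ 2 / (n + 1)

section SqDeviation

variable {A : ℕ} {s : ℝ}

lemma sqDeviation_nonneg (A n l : ℕ) : 0 ≤ sqDeviation A n l := by
  rw [sqDeviation]
  positivity

lemma sqDeviation_mul_eq (A n l : ℕ) :
    sqDeviation A n l * (n + 1) = ((l : ℝ) - (n / A : ℕ)) ^ 2 :=
  div_mul_cancel₀ _ (by positivity)

lemma binomialMean_sqDeviation_pow_le (hA : 0 < A) (n j : ℕ) :
    binomialMean (A : ℝ)⁻¹ n (fun l => sqDeviation A n l ^ j)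
      ≤ (2 * j).factorial * (2 * (Real.exp 1 * Real.exp 1)) := by
  refine binomialMean_sq_sub_div_pow_le (by positivity) (Nat.cast_inv_le_one A) ?_ j
  have hA' : (0 : ℝ) < A := mod_cast hA
  have lower : (n / A : ℕ) ≤ (n : ℝ) / A := Nat.cast_div_le
  have upper : (n : ℝ) / A ≤ (n / A : ℕ) + 1 := by
    rw [div_le_iff₀ hA', mul_comm]
    exact mod_cast (Nat.lt_mul_div_succ n hA).le
  rw [← div_eq_mul_inv, abs_le]
  constructor <;> linarith

lemma natCast_add_one_sq_le (hA : 0 < A) (n l : ℕ) :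
    ((n : ℝ) + 1) ^ 2
      ≤ ((min l (n / A) : ℕ) + 1) * (2 * A ^ 2 * (n + 1) * (1 + sqDeviation A n l)) := by
  set x : ℝ := (min l (n / A) : ℕ) + 1
  set d : ℝ := (n / A : ℕ) + 1 - x with hd
  have one_le_x : 1 ≤ x := by simp [x]
  have x_le : x ≤ n + 1 := by
    simp only [x, add_le_add_iff_right, Nat.cast_le]
    exact (min_le_right _ _).trans (Nat.div_le_self n A)
  have d_sq_le : d ^ 2 ≤ sqDeviation A n l * (n + 1) := by
    rw [sqDeviation_mul_eq, sq_le_sq, hd, abs_sub_comm (l : ℝ)]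
    rcases min_cases l (n / A) with ⟨hmin, -⟩ | ⟨hmin, -⟩ <;> simp [x, hmin]
  have n_le : (n : ℝ) + 1 ≤ A * (x + d) := by
    rw [hd, add_sub_cancel]
    exact mod_cast Nat.lt_mul_div_succ n hA
  calc ((n : ℝ) + 1) ^ 2 ≤ (A * (x + d)) ^ 2 := by gcongr
    _ ≤ 2 * A ^ 2 * (x * x + 1 * d ^ 2) := by nlinarith [sq_nonneg ((A : ℝ) * (x - d))]
    _ ≤ 2 * A ^ 2 * (x * (n + 1) + x * (sqDeviation A n l * (n + 1))) := by gcongr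
    _ = x * (2 * A ^ 2 * (n + 1) * (1 + sqDeviation A n l)) := by ring

lemma rpow_min_add_one_le (hA : 0 < A) (hs : -1 ≤ s) (n l : ℕ) :
    ((min l (n / A) : ℕ) + 1 : ℝ) ^ s
      ≤ 2 * A ^ 2 * ((n : ℝ) + 1) ^ s * (1 + sqDeviation A n l) := by
  set x : ℝ := (min l (n / A) : ℕ) + 1
  have hx : 0 < x := by positivity
  have x_le : x ≤ n + 1 := by
    simp only [x, add_le_add_iff_right, Nat.cast_le]
    exact (min_le_right _ _).trans (Nat.div_le_self n A)
  have ratio_le : ((n : ℝ) + 1) / x ≤ 2 * A ^ 2 * (1 + sqDeviation A n l) := by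
    rw [div_le_iff₀ hx]
    refine le_of_mul_le_mul_right ?_ (show (0 : ℝ) < n + 1 by positivity)
    linarith [natCast_add_one_sq_le hA n l]
  calc x ^ s = (((n : ℝ) + 1) / x) ^ (-s) * ((n : ℝ) + 1) ^ s := by
        rw [Real.div_rpow (by positivity) hx.le, Real.rpow_neg (by positivity),
          Real.rpow_neg hx.le]
        field_simp
    _ ≤ (((n : ℝ) + 1) / x) ^ (1 : ℝ) * ((n : ℝ) + 1) ^ s := by
        gcongr
        · exact (one_le_div hx).2 x_le
        · linarith
    _ ≤ 2 * A ^ 2 * (1 + sqDeviation A n l) * ((n : ℝ) + 1) ^ s := by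
        rw [Real.rpow_one]
        gcongr
    _ = 2 * A ^ 2 * ((n : ℝ) + 1) ^ s * (1 + sqDeviation A n l) := by ring

lemma abs_newtonRemainder_le_rpow (hA : 0 < A) (hs : -1 ≤ s) (hs0 : s ≤ 0) {f : ℕ → ℝ} {C : ℝ}
    (hC : 0 ≤ C) (h : ∀ n : ℕ, |fwdDiff 1 (fwdDiff 1 f) n| ≤ C * ((n : ℝ) + 1) ^ s) (n l : ℕ) :
    |newtonRemainder f (n / A) l|
      ≤ 4 * A ^ 2 * C * ((n : ℝ) + 1) ^ (s + 1) * (1 + sqDeviation A n l ^ 2) := by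
  set ζ := sqDeviation A n l
  have hζ : 0 ≤ ζ := sqDeviation_nonneg A n l
  calc |newtonRemainder f (n / A) l|
      ≤ C * ((min l (n / A) : ℕ) + 1 : ℝ) ^ s * (l - (n / A : ℕ)) ^ 2 := by
        refine abs_newtonRemainder_le fun j hj => (h j).trans ?_
        gcongr C * ?_
        rw [min_comm] at hj
        exact Real.rpow_le_rpow_of_nonpos (by positivity) (by gcongr) hs0
    _ ≤ C * (2 * A ^ 2 * ((n : ℝ) + 1) ^ s * (1 + ζ)) * (ζ * (n + 1)) := by
        rw [← sqDeviation_mul_eq A n l]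
        gcongr
        exact rpow_min_add_one_le hA hs n l
    _ = 2 * A ^ 2 * C * ((n : ℝ) + 1) ^ (s + 1) * (ζ + ζ ^ 2) := by
        rw [Real.rpow_add_one (by positivity)]
        ring
    _ ≤ 2 * A ^ 2 * C * ((n : ℝ) + 1) ^ (s + 1) * (2 * (1 + ζ ^ 2)) := by
        gcongr
        nlinarith [sq_nonneg (ζ - 1)]
    _ = 4 * A ^ 2 * C * ((n : ℝ) + 1) ^ (s + 1) * (1 + ζ ^ 2) := by ring

end SqDeviation

namespace IsMomentSystem

variable {A M : ℕ} {R : ℕ → ℝ⟦X⟧}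

lemma exists_abs_fwdDiff_fwdDiff_seriesMean_le (S : IsMomentSystem A M R) :
    ∃ C ≥ 0, ∀ n : ℕ,
      |fwdDiff 1 (fwdDiff 1 (seriesMean R)) n| ≤ C * ((n : ℝ) + 1) ^ (tollExponent A M - 1) := by
  have hA : (A : ℝ) ≠ 0 := (inv_pos.1 S.inv_alphabet_pos).ne'
  have hK (s : ℝ) : M * A * (A : ℝ)⁻¹ * (A : ℝ)⁻¹ * (A : ℝ)⁻¹ ^ s
      = M * A * (A : ℝ)⁻¹ ^ (s + 1 + 1) := by
    rw [Real.rpow_add_one (inv_ne_zero hA), Real.rpow_add_one (inv_ne_zero hA)]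
    ring
  refine exists_abs_le_rpow_of_le_binomialMean S.inv_alphabet_pos S.inv_alphabet_lt_one
    (by linarith [S.half_lt_tollExponent]) (K := M * A * (A : ℝ)⁻¹ * (A : ℝ)⁻¹) (by positivity)
    ?_ le_rfl ?_
  · rw [hK]
    exact S.mul_inv_rpow_lt_one (by linarith [S.varianceExponent_lt_tollExponent_add_one])
  · filter_upwards [eventually_ge_atTop 2] with n hn
    have toll_flat : fwdDiff 1 (fwdDiff 1 toll) n = 0 := by
      simp [fwdDiff, toll, hn, show 2 ≤ n + 1 by lia]
    rw [fwdDiff_eq_add_binomialMean (fwdDiff_eq_add_binomialMean S.seriesMean_eq_add), toll_flat,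
      zero_add, zero_mul, add_zero, abs_mul, abs_of_nonneg (by positivity)]
    gcongr
    exact abs_binomialMean_le S.inv_alphabet_pos.le S.inv_alphabet_lt_one.le _ _

end IsMomentSystem

/-! ### Moments of the toll and growth of the variance -/

lemma binomialMean_newtonRemainder (q : ℝ) (n : ℕ) (f : ℕ → ℝ) (k : ℕ) :
    binomialMean q n (newtonRemainder f k)
      = binomialMean q n f - f k - (n * q - k) * fwdDiff 1 f k := by
  have expansion : newtonRemainder f k = fun l => f l - f k - fwdDiff 1 f k * (l - k) := by
    funext l
    rw [newtonRemainder, mul_comm]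
  rw [expansion, binomialMean_sub, binomialMean_sub, binomialMean_const_mul, binomialMean_sub,
    binomialMean_natCast, binomialMean_const, binomialMean_const, mul_comm]

lemma exists_binomialMean_add_sqDeviation_pow_le {A : ℕ} (hA : 0 < A) {b : ℝ} (hb : 0 ≤ b)
    (j : ℕ) :
    ∃ C ≥ 0, ∀ n : ℕ,
      binomialMean (A : ℝ)⁻¹ n (fun l => (sqDeviation A n l ^ 2 + b) ^ j) ≤ C := by
  refine ⟨2 ^ (j - 1) * ((2 * (2 * j)).factorial * (2 * (Real.exp 1 * Real.exp 1)) + b ^ j),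
    by positivity, fun n => ?_⟩
  calc binomialMean (A : ℝ)⁻¹ n (fun l => (sqDeviation A n l ^ 2 + b) ^ j)
      ≤ binomialMean (A : ℝ)⁻¹ n
          (fun l => 2 ^ (j - 1) * (sqDeviation A n l ^ (2 * j) + b ^ j)) := by
        refine binomialMean_mono (by positivity) (Nat.cast_inv_le_one A) fun l _ => ?_
        rw [pow_mul]
        exact add_pow_le (sq_nonneg _) hb j
    _ ≤ _ := by
        rw [binomialMean_const_mul, binomialMean_add, binomialMean_const]
        gcongr
        exact binomialMean_sqDeviation_pow_le hA n (2 * j)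

namespace IsMomentSystem

variable {A M : ℕ} {R : ℕ → ℝ⟦X⟧}

-- The linear part of the mean does not fluctuate, because the sizes of the fibers add up to `n`.
lemma centredToll_eq_sum_newtonRemainder (S : IsMomentSystem A M R) (n k : ℕ)
    (c : Fin n → Fin A) :
    centredToll A M R n c = ∑ a, (newtonRemainder (seriesMean R) k (fiberCard c a)
      - binomialMean (A : ℝ)⁻¹ n (newtonRemainder (seriesMean R) k)) := by
  have hM : (M : ℝ) ≠ 0 := have := S.neZero_arity; NeZero.ne _
  have hA : (A : ℝ) ≠ 0 := have := S.neZero_alphabet; NeZero.ne _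
  have card_sum : ∑ a, (fiberCard c a : ℝ) = n := mod_cast sum_fiberCard c
  have remainder_sum : ∑ a, newtonRemainder (seriesMean R) k (fiberCard c a)
      = ∑ a, seriesMean R (fiberCard c a) - A * seriesMean R k
        - (n - A * k) * fwdDiff 1 (seriesMean R) k := by
    simp [newtonRemainder, sum_sub_distrib, ← sum_mul, card_sum]
  rw [sum_sub_distrib, remainder_sum, binomialMean_newtonRemainder, centredToll,
    S.seriesMean_eq_add n]
  simp only [sum_const, card_univ, Fintype.card_fin, nsmul_eq_mul]
  field_simp
  ring

lemma exists_abs_centredToll_le_sum (S : IsMomentSystem A M R) :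
    ∃ C ≥ 0, ∃ b ≥ 0, ∀ (n : ℕ) (c : Fin n → Fin A), |centredToll A M R n c|
      ≤ C * ((n : ℝ) + 1) ^ tollExponent A M
        * ∑ a, (sqDeviation A n (fiberCard c a) ^ 2 + b) := by
  have hA : 0 < A := zero_lt_one.trans S.one_lt_alphabet
  obtain ⟨C, hC, h_curv⟩ := S.exists_abs_fwdDiff_fwdDiff_seriesMean_le
  obtain ⟨D, hD, h_mean⟩ := exists_binomialMean_add_sqDeviation_pow_le hA zero_le_one 1
  refine ⟨4 * A ^ 2 * C, by positivity, 1 + D, by positivity, fun n c => ?_⟩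
  set w := 4 * A ^ 2 * C * ((n : ℝ) + 1) ^ tollExponent A M
  have remainder_le (l : ℕ) :
      |newtonRemainder (seriesMean R) (n / A) l| ≤ w * (sqDeviation A n l ^ 2 + 1) := by
    have := abs_newtonRemainder_le_rpow hA (by linarith [S.half_lt_tollExponent])
      (by linarith [S.tollExponent_lt_one]) hC h_curv n l
    rwa [sub_add_cancel, add_comm (1 : ℝ)] at this
  have mean_remainder_le :
      |binomialMean (A : ℝ)⁻¹ n (newtonRemainder (seriesMean R) (n / A))| ≤ w * D := by
    refine (abs_binomialMean_le S.inv_alphabet_pos.le S.inv_alphabet_lt_one.le _ _).trans ?_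
    calc _ ≤ binomialMean (A : ℝ)⁻¹ n (fun l => w * (sqDeviation A n l ^ 2 + 1) ^ 1) :=
          binomialMean_mono S.inv_alphabet_pos.le S.inv_alphabet_lt_one.le fun l _ => by
            simpa using remainder_le l
      _ ≤ w * D := by
          rw [binomialMean_const_mul]
          gcongr
          exact h_mean n
  rw [S.centredToll_eq_sum_newtonRemainder n (n / A) c, mul_sum]
  refine (abs_sum_le_sum_abs _ _).trans (sum_le_sum fun a _ => (abs_sub _ _).trans ?_)
  linarith [remainder_le (fiberCard c a)]

lemma exists_expect_abs_centredToll_pow_le (S : IsMomentSystem A M R) (j : ℕ) :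
    ∃ C ≥ 0, ∀ n : ℕ, 𝔼 c, |centredToll A M R n c| ^ (j + 1)
      ≤ C * (((n : ℝ) + 1) ^ tollExponent A M) ^ (j + 1) := by
  have := S.neZero_alphabet
  obtain ⟨C, hC, b, hb, h⟩ := S.exists_abs_centredToll_le_sum
  obtain ⟨D, hD, h_mean⟩ :=
    exists_binomialMean_add_sqDeviation_pow_le (NeZero.pos A) hb (j + 1)
  refine ⟨C ^ (j + 1) * A ^ j * (A * D), by positivity, fun n => ?_⟩
  set w := ((n : ℝ) + 1) ^ tollExponent A M
  calc 𝔼 c, |centredToll A M R n c| ^ (j + 1)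
      ≤ 𝔼 c : Fin n → Fin A, (C * w) ^ (j + 1)
          * (A ^ j * ∑ a, (sqDeviation A n (fiberCard c a) ^ 2 + b) ^ (j + 1)) := by
        refine expect_le_expect fun c _ => ?_
        have power_mean := pow_sum_le_card_mul_sum_pow (s := univ)
          (f := fun a => sqDeviation A n (fiberCard c a) ^ 2 + b)
          (fun a _ => by positivity) j
        rw [card_univ, Fintype.card_fin] at power_mean
        calc _ ≤ (C * w * ∑ a, (sqDeviation A n (fiberCard c a) ^ 2 + b)) ^ (j + 1) := by
              gcongr
              exact h n c
          _ ≤ _ := by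
              rw [mul_pow]
              gcongr
    _ = (C * w) ^ (j + 1) * (A ^ j * (A * binomialMean (A : ℝ)⁻¹ n
          (fun l => (sqDeviation A n l ^ 2 + b) ^ (j + 1)))) := by
        rw [← mul_expect, ← mul_expect,
          expect_sum_fiberCard n fun l => (sqDeviation A n l ^ 2 + b) ^ (j + 1)]
    _ ≤ (C * w) ^ (j + 1) * (A ^ j * (A * D)) := by
        gcongr
        exact h_mean n
    _ = C ^ (j + 1) * A ^ j * (A * D) * w ^ (j + 1) := by ring

lemma exists_seriesVariance_le (S : IsMomentSystem A M R) :
    ∃ C ≥ 0, ∀ n : ℕ, seriesVariance R n ≤ C * ((n : ℝ) + 1) ^ varianceExponent A M := by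
  obtain ⟨C, hC, h⟩ := S.exists_expect_abs_centredToll_pow_le 1
  refine exists_le_rpow_of_le_binomialMean S.inv_alphabet_pos S.inv_alphabet_lt_one
    S.mul_inv_rpow_varianceExponent S.varianceExponent_lt_two.le
    (by linarith [S.half_lt_tollExponent]) S.two_mul_tollExponent_lt (C₀ := M * C)
    (by positivity) fun n => ?_
  have toll_moment := h n
  simp only [one_add_one_eq_two, sq_abs] at toll_moment
  rw [S.seriesVariance_eq_add n, mul_assoc (M : ℝ) C, mul_comm (2 : ℝ),
    Real.rpow_mul (by positivity), Real.rpow_ofNat]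
  gcongr

end IsMomentSystem

/-! ### Fluctuations of the variance -/

section Fluctuation

variable {q K ρ t : ℝ} {x : ℕ → ℝ}

lemma abs_binomialMean_succ_sub_le (h0 : 0 ≤ q) (h1 : q < 1) (hρ : 0 ≤ ρ) {C : ℝ} (hC : 0 ≤ C)
    (hx : ∀ n : ℕ, |x n| ≤ C * ((n : ℝ) + 1) ^ ρ) (n : ℕ) :
    |binomialMean q (n + 1) x - binomialMean q n x|
      ≤ C * 2 ^ (ρ + 1 / 2) / (1 - q) * ((n : ℝ) + 1) ^ (ρ - 1 / 2) := by
  have hq : 0 < 1 - q := sub_pos.2 h1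
  have deviation := binomialMean_abs_sub_le h0 h1.le (n + 1)
  push_cast at deviation
  have score_le : |binomialMean q (n + 1) (fun k => ((k : ℝ) - (n + 1) * q) * x k)|
      ≤ C * ((n : ℝ) + 1 + 1) ^ (ρ + 1 / 2) := by
    calc _ ≤ binomialMean q (n + 1)
          (fun k => C * ((n : ℝ) + 1 + 1) ^ ρ * |(k : ℝ) - (n + 1) * q|) := by
          refine (abs_binomialMean_le h0 h1.le _ _).trans
            (binomialMean_mono h0 h1.le fun k hk => ?_)
          rw [abs_mul, mul_comm]
          gcongr
          refine (hx k).trans ?_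
          gcongr
          exact mod_cast hk
      _ ≤ C * ((n : ℝ) + 1 + 1) ^ ρ * ((n : ℝ) + 1 + 1) ^ (1 / 2 : ℝ) := by
          rw [binomialMean_const_mul]
          gcongr
      _ = C * ((n : ℝ) + 1 + 1) ^ (ρ + 1 / 2) := by
          rw [Real.rpow_add (by positivity), mul_assoc]
  rw [binomialMean_succ_sub_eq_div h1, abs_div, abs_of_pos (by positivity : 0 < (n + 1) * (1 - q)),
    div_le_iff₀ (by positivity)]
  calc _ ≤ C * (2 * ((n : ℝ) + 1)) ^ (ρ + 1 / 2) := by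
        refine score_le.trans ?_
        gcongr
        linarith [(Nat.cast_nonneg n : (0 : ℝ) ≤ n)]
    _ = C * 2 ^ (ρ + 1 / 2) * ((n : ℝ) + 1) ^ (ρ - 1 / 2 + 1) := by
        rw [Real.mul_rpow (by positivity) (by positivity), mul_assoc]
        ring_nf
    _ = _ := by
        rw [Real.rpow_add_one (by positivity)]
        field_simp

/-- Up to an error of order `(n + 1) ^ t`, the sequence `x` has increments at most
`B (n + 1) ^ s`, up to an additive constant. -/
def HasSlowApproximation (x : ℕ → ℝ) (t s B : ℝ) : Prop :=
  ∃ f : ℕ → ℝ, ∃ C ≥ 0, ∀ n : ℕ,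
    |x n - f n| ≤ C * ((n : ℝ) + 1) ^ t ∧ |fwdDiff 1 f n| ≤ B * ((n : ℝ) + 1) ^ s + C

lemma abs_sub_mul_binomialMean_le (h0 : 0 ≤ q) (h1 : q ≤ 1) (hK : 0 ≤ K) (ht : 0 ≤ t) {f : ℕ → ℝ}
    {C C₁ : ℝ} (hC : 0 ≤ C)
    (hr : ∀ n : ℕ, |x n - K * binomialMean q n x| ≤ C₁ * ((n : ℝ) + 1) ^ t)
    (hf : ∀ n : ℕ, |x n - f n| ≤ C * ((n : ℝ) + 1) ^ t) (n : ℕ) :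
    |x n - K * binomialMean q n f| ≤ (C₁ + K * C) * ((n : ℝ) + 1) ^ t := by
  have split : x n - K * binomialMean q n f
      = (x n - K * binomialMean q n x) + K * binomialMean q n (fun k => x k - f k) := by
    rw [binomialMean_sub]
    ring
  have mean_close : |binomialMean q n (fun k => x k - f k)| ≤ C * ((n : ℝ) + 1) ^ t := by
    rw [← binomialMean_const q n (C * ((n : ℝ) + 1) ^ t)]
    refine (abs_binomialMean_le h0 h1 _ _).trans
      (binomialMean_mono h0 h1 fun k hk => (hf k).trans ?_)
    gcongr
  calc _ ≤ C₁ * ((n : ℝ) + 1) ^ t + K * (C * ((n : ℝ) + 1) ^ t) := by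
        rw [split]
        refine (abs_add_le _ _).trans (add_le_add (hr n) ?_)
        rw [abs_mul, abs_of_nonneg hK]
        gcongr
    _ = (C₁ + K * C) * ((n : ℝ) + 1) ^ t := by ring

-- Averaging smooths: replacing the approximation `f` by `K * binomialMean q · f` shrinks its
-- increments by the factor `θ < 1`.
lemma HasSlowApproximation.mul_left (h0 : 0 ≤ q) (h1 : q ≤ 1) (hK : 0 ≤ K) (ht : 0 ≤ t)
    {C₁ D θ s B : ℝ} (hC₁ : 0 ≤ C₁) (hD : 0 ≤ D) (hB : 0 ≤ B)
    (hr : ∀ n : ℕ, |x n - K * binomialMean q n x| ≤ C₁ * ((n : ℝ) + 1) ^ t)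
    (hθ : ∀ n : ℕ,
      K * q * binomialMean q n (fun k => ((k : ℝ) + 1) ^ s) ≤ θ * ((n : ℝ) + 1) ^ s + D)
    (hx : HasSlowApproximation x t s B) : HasSlowApproximation x t s (θ * B) := by
  obtain ⟨f, C, hC, h⟩ := hx
  refine ⟨fun n => K * binomialMean q n f, (C₁ + K * C) + (B * D + K * q * C), by positivity,
    fun n => ⟨?_, ?_⟩⟩
  · refine (abs_sub_mul_binomialMean_le h0 h1 hK ht hC hr (fun n => (h n).1) n).trans ?_
    exact mul_le_mul_of_nonneg_right (le_add_of_nonneg_right (by positivity)) (by positivity)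
  · calc |fwdDiff 1 (fun n => K * binomialMean q n f) n|
        ≤ K * q * binomialMean q n (fun k => B * ((k : ℝ) + 1) ^ s + C) := by
          rw [fwdDiff_const_mul_binomialMean, abs_mul, abs_of_nonneg (by positivity)]
          gcongr
          exact (abs_binomialMean_le h0 h1 _ _).trans
            (binomialMean_mono h0 h1 fun k _ => (h k).2)
      _ = B * (K * q * binomialMean q n (fun k => ((k : ℝ) + 1) ^ s)) + K * q * C := by
          rw [binomialMean_add, binomialMean_const_mul, binomialMean_const]
          ring
      _ ≤ B * (θ * ((n : ℝ) + 1) ^ s + D) + K * q * C := by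
          gcongr
          exact hθ n
      _ ≤ θ * B * ((n : ℝ) + 1) ^ s + ((C₁ + K * C) + (B * D + K * q * C)) := by
          nlinarith [mul_nonneg hK hC]

lemma exists_forall_mul_binomialMean_rpow_le (h0 : 0 < q) (h1 : q ≤ 1) {s : ℝ} (hs : -1 < s)
    (hK : 0 ≤ K) (hKs : K * q ^ s < 1) :
    ∃ θ ≥ 0, θ < 1 ∧ ∃ D ≥ 0, ∀ n : ℕ,
      K * binomialMean q n (fun k => ((k : ℝ) + 1) ^ s) ≤ θ * ((n : ℝ) + 1) ^ s + D := by
  obtain ⟨θ, hθ, hmean⟩ := exists_eventually_mul_binomialMean_rpow_le h0 h1 hs hK hKs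
  obtain ⟨n₀, hn₀⟩ := eventually_atTop.1 hmean
  obtain ⟨D, hD, hinit⟩ := exists_forall_lt_abs_le
    (fun n => K * binomialMean q n (fun k => ((k : ℝ) + 1) ^ s)) n₀
  refine ⟨max θ 0, le_max_right _ _, max_lt hθ one_pos, D, hD, fun n => ?_⟩
  rcases lt_or_ge n n₀ with hn | hn
  · exact ((le_abs_self _).trans (hinit n hn)).trans (le_add_of_nonneg_left (by positivity))
  · refine (hn₀ n hn).trans (le_add_of_le_of_nonneg ?_ hD)
    gcongr
    exact le_max_left _ _

lemma hasSlowApproximation_of_binomialMean (h0 : 0 < q) (h1 : q < 1) (hKρ : K * q ^ ρ = 1)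
    (hρ : 0 ≤ ρ) (ht : 0 ≤ t) {C C₁ : ℝ} (hC : 0 ≤ C) (hC₁ : 0 ≤ C₁)
    (hx : ∀ n : ℕ, |x n| ≤ C * ((n : ℝ) + 1) ^ ρ)
    (hr : ∀ n : ℕ, |x n - K * binomialMean q n x| ≤ C₁ * ((n : ℝ) + 1) ^ t)
    {η : ℝ} (hη : 0 < η) : HasSlowApproximation x t (ρ - 1 / 2) η := by
  have hK : 0 < K := pos_of_mul_pos_left (hKρ ▸ one_pos) (Real.rpow_nonneg h0.le ρ)
  have : 0 < 1 - q := sub_pos.2 h1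
  have subcritical : K * q * q ^ (ρ - 1 / 2) < 1 := by
    have := Real.rpow_lt_one h0.le h1 (z := 1 / 2) (by norm_num)
    rwa [mul_assoc, mul_comm q, ← Real.rpow_add_one h0.ne', show ρ - 1 / 2 + 1 = ρ + 1 / 2 by ring,
      Real.rpow_add h0, ← mul_assoc, hKρ, one_mul]
  obtain ⟨θ, hθ0, hθ1, D, hD, hθ⟩ := exists_forall_mul_binomialMean_rpow_le h0 h1.le
    (by linarith) (by positivity) subcritical
  set B := K * (C * 2 ^ (ρ + 1 / 2) / (1 - q))
  have start : HasSlowApproximation x t (ρ - 1 / 2) B :=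
    ⟨fun n => K * binomialMean q n x, C₁, hC₁, fun n => ⟨hr n, by
      rw [fwdDiff, ← mul_sub, abs_mul, abs_of_pos hK, mul_assoc]
      refine le_add_of_le_of_nonneg ?_ hC₁
      gcongr
      exact abs_binomialMean_succ_sub_le h0.le h1 hρ hC hx n⟩⟩
  have iterate (h : ℕ) : HasSlowApproximation x t (ρ - 1 / 2) (θ ^ h * B) := by
    induction h with
    | zero => rwa [pow_zero, one_mul]
    | succ h ih =>
      rw [pow_succ', mul_assoc]
      exact ih.mul_left h0.le h1.le hK.le ht hC₁ hD (by positivity) hr hθ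
  obtain ⟨h, hh⟩ := exists_pow_lt_of_lt_one (div_pos hη (show 0 < B + 1 by positivity)) hθ1
  obtain ⟨f, C', hC', h_approx⟩ := iterate h
  refine ⟨f, C', hC', fun n => ⟨(h_approx n).1, (h_approx n).2.trans ?_⟩⟩
  gcongr
  rw [lt_div_iff₀ (by positivity)] at hh
  linarith [pow_nonneg hθ0 h]

lemma binomialMean_abs_sub_binomialMean_le (h0 : 0 ≤ q) (h1 : q ≤ 1) {n : ℕ} {c B : ℝ}
    (hB : 0 ≤ B)
    (hx : ∀ k ≤ n, ∀ l ≤ n, |x k - x l| ≤ c + B * |(k : ℝ) - l|) :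
    binomialMean q n (fun k => |x k - binomialMean q n x|)
      ≤ c + 2 * B * ((n : ℝ) + 1) ^ (1 / 2 : ℝ) := by
  have deviation := binomialMean_abs_sub_le h0 h1 n
  have pointwise (k : ℕ) (hk : k ≤ n) : |x k - binomialMean q n x|
      ≤ c + B * ((n : ℝ) + 1) ^ (1 / 2 : ℝ) + B * |(k : ℝ) - n * q| := by
    calc |x k - binomialMean q n x| = |binomialMean q n (fun l => x k - x l)| := by
          rw [binomialMean_sub, binomialMean_const]
      _ ≤ binomialMean q n (fun l => (c + B * |(k : ℝ) - n * q|) + B * |(l : ℝ) - n * q|) := by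
          refine (abs_binomialMean_le h0 h1 _ _).trans
            (binomialMean_mono h0 h1 fun l hl => (hx k hk l hl).trans ?_)
          rw [add_assoc, ← mul_add, abs_sub_comm (l : ℝ)]
          gcongr
          exact abs_sub_le _ _ _
      _ ≤ _ := by
          rw [binomialMean_add, binomialMean_const, binomialMean_const_mul]
          nlinarith
  refine (binomialMean_mono h0 h1 pointwise).trans ?_
  rw [binomialMean_add, binomialMean_const, binomialMean_const_mul]
  nlinarith

lemma isLittleO_binomialMean_abs_sub (h0 : 0 < q) (h1 : q < 1) (hKρ : K * q ^ ρ = 1)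
    (ht : 1 / 2 ≤ t) (htρ : t < ρ) {C C₁ : ℝ} (hC : 0 ≤ C) (hC₁ : 0 ≤ C₁)
    (hx : ∀ n : ℕ, |x n| ≤ C * ((n : ℝ) + 1) ^ ρ)
    (hr : ∀ n : ℕ, |x n - K * binomialMean q n x| ≤ C₁ * ((n : ℝ) + 1) ^ t) :
    (fun n => binomialMean q n (fun k => |x k - binomialMean q n x|))
      =o[atTop] fun n : ℕ => ((n : ℝ) + 1) ^ ρ := by
  refine isLittleO_of_forall_abs_le_add htρ fun η hη => ?_
  obtain ⟨f, C', hC', hf⟩ := hasSlowApproximation_of_binomialMean h0 h1 hKρ (by linarith)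
    (by linarith) hC hC₁ hx hr (half_pos hη)
  refine ⟨4 * C', by positivity, fun n => ?_⟩
  set N := (n : ℝ) + 1
  have increment (k : ℕ) (hk : k ≤ n) (l : ℕ) (hl : l ≤ n) :
      |x k - x l| ≤ 2 * C' * N ^ t + (η / 2 * N ^ (ρ - 1 / 2) + C') * |(k : ℝ) - l| := by
    have cast_le {j : ℕ} (hj : j ≤ n) : (j : ℝ) + 1 ≤ N := by
      simpa [N] using hj
    have close (j : ℕ) (hj : j ≤ n) : |x j - f j| ≤ C' * N ^ t :=
      (hf j).1.trans (by gcongr; exact cast_le hj)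
    have slope : |f k - f l| ≤ (η / 2 * N ^ (ρ - 1 / 2) + C') * |(k : ℝ) - l| := by
      refine abs_sub_le_of_abs_fwdDiff_le fun j _ hj => (hf j).2.trans ?_
      have := cast_le (hj.le.trans (max_le hl hk))
      have : 0 ≤ ρ - 1 / 2 := by linarith
      gcongr
    have := close l hl
    rw [abs_sub_comm] at this
    linarith [close k hk, abs_sub_le (x k) (f k) (x l), abs_sub_le (f k) (f l) (x l)]
  rw [abs_of_nonneg (binomialMean_nonneg h0.le h1.le fun _ _ => abs_nonneg _)]
  calc _ ≤ 2 * C' * N ^ t + 2 * (η / 2 * N ^ (ρ - 1 / 2) + C') * N ^ (1 / 2 : ℝ) :=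
        binomialMean_abs_sub_binomialMean_le h0.le h1.le (by positivity) increment
    _ = η * N ^ ρ + (2 * C' * N ^ t + 2 * C' * N ^ (1 / 2 : ℝ)) := by
        have : N ^ ρ = N ^ (ρ - 1 / 2) * N ^ (1 / 2 : ℝ) := by
          rw [← Real.rpow_add (by positivity), sub_add_cancel]
        rw [this]
        ring
    _ ≤ η * N ^ ρ + (2 * C' * N ^ t + 2 * C' * N ^ t) := by
        gcongr
        simp [N]
    _ = η * N ^ ρ + 4 * C' * N ^ t := by ring

end Fluctuation

namespace IsMomentSystem

variable {A M : ℕ} {R : ℕ → ℝ⟦X⟧}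

lemma exists_abs_seriesVariance_sub_le (S : IsMomentSystem A M R) :
    ∃ C ≥ 0, ∀ n : ℕ,
      |seriesVariance R n - M * A * binomialMean (A : ℝ)⁻¹ n (seriesVariance R)|
        ≤ C * ((n : ℝ) + 1) ^ (2 * tollExponent A M) := by
  obtain ⟨C, hC, h⟩ := S.exists_expect_abs_centredToll_pow_le 1
  refine ⟨M * C, by positivity, fun n => ?_⟩
  have toll_moment := h n
  simp only [one_add_one_eq_two, sq_abs] at toll_moment
  have : 0 ≤ 𝔼 c, centredToll A M R n c ^ 2 := expect_nonneg fun _ _ => sq_nonneg _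
  rw [S.seriesVariance_eq_add n, add_sub_cancel_left, abs_of_nonneg (by positivity),
    mul_assoc (M : ℝ), mul_comm (2 : ℝ), Real.rpow_mul (by positivity), Real.rpow_ofNat]
  gcongr

lemma isLittleO_seriesVariance_sub (S : IsMomentSystem A M R) :
    (fun n => seriesVariance R n - M * A * binomialMean (A : ℝ)⁻¹ n (seriesVariance R))
      =o[atTop] fun n : ℕ => ((n : ℝ) + 1) ^ varianceExponent A M := by
  obtain ⟨C, hC, h⟩ := S.exists_abs_seriesVariance_sub_le
  exact isLittleO_of_forall_abs_le_add S.two_mul_tollExponent_lt fun η hη =>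
    ⟨C, hC, fun n => (h n).trans (le_add_of_nonneg_left (by positivity))⟩

lemma isLittleO_binomialMean_abs_seriesVariance_sub (S : IsMomentSystem A M R) :
    (fun n => binomialMean (A : ℝ)⁻¹ n
        (fun k => |seriesVariance R k - binomialMean (A : ℝ)⁻¹ n (seriesVariance R)|))
      =o[atTop] fun n : ℕ => ((n : ℝ) + 1) ^ varianceExponent A M := by
  obtain ⟨C, hC, growth⟩ := S.exists_seriesVariance_le
  obtain ⟨C₁, hC₁, recursion⟩ := S.exists_abs_seriesVariance_sub_le
  exact isLittleO_binomialMean_abs_sub S.inv_alphabet_pos S.inv_alphabet_lt_one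
    S.mul_inv_rpow_varianceExponent (by linarith [S.half_lt_tollExponent])
    S.two_mul_tollExponent_lt hC hC₁
    (fun n => by rw [abs_of_nonneg (S.variance_nonneg n)]; exact growth n) recursion

lemma isLittleO_expect_abs_sum_seriesVariance_sub (S : IsMomentSystem A M R) :
    (fun n => 𝔼 c : Fin n → Fin A,
        |∑ a, seriesVariance R (fiberCard c a) - seriesVariance R n / M|)
      =o[atTop] fun n : ℕ => ((n : ℝ) + 1) ^ varianceExponent A M := by
  have := S.neZero_alphabet
  have hM : (M : ℝ) ≠ 0 := have := S.neZero_arity; NeZero.ne _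
  set v := seriesVariance R
  set E : ℕ → ℝ := fun n => binomialMean (A : ℝ)⁻¹ n v
  have pointwise (n : ℕ) (c : Fin n → Fin A) : |∑ a, v (fiberCard c a) - v n / M|
      ≤ ∑ a, |v (fiberCard c a) - E n| + (M : ℝ)⁻¹ * |v n - M * A * E n| := by
    calc _ = |∑ a, (v (fiberCard c a) - E n) - (M : ℝ)⁻¹ * (v n - M * A * E n)| := by
          congr 1
          rw [sum_sub_distrib, sum_const, card_univ, Fintype.card_fin, nsmul_eq_mul]
          field_simp
          ring
      _ ≤ _ := (abs_sub _ _).trans (add_le_add (abs_sum_le_sum_abs _ _)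
          (by rw [abs_mul, abs_of_nonneg (by positivity : (0 : ℝ) ≤ (M : ℝ)⁻¹)]))
  refine (Asymptotics.IsBigO.of_norm_le fun n => ?_).trans_isLittleO
    ((S.isLittleO_binomialMean_abs_seriesVariance_sub.const_mul_left (A : ℝ)).add
      (S.isLittleO_seriesVariance_sub.norm_left.const_mul_left (M : ℝ)⁻¹))
  rw [Real.norm_of_nonneg (expect_nonneg fun _ _ => abs_nonneg _)]
  refine (expect_le_expect fun c _ => pointwise n c).trans_eq ?_
  rw [expect_add_distrib, expect_sum_fiberCard n fun k => |v k - E n|, Fintype.expect_const]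
  rfl

end IsMomentSystem

/-! ### Comparison with the Gaussian series -/

lemma exists_tendsto_forall_le_abs_mul_le {s : ℝ} (hs : 0 < s) {x : ℕ → ℝ}
    (hx : x =o[atTop] fun n : ℕ => ((n : ℝ) + 1) ^ s) :
    ∃ ε : ℕ → ℝ, Tendsto ε atTop (𝓝 0) ∧
      ∀ n : ℕ, ∀ k ≤ n, |x k| * ((n : ℝ) + 1) ^ (-s) ≤ ε n := by
  have hne (n : ℕ) : (range (n + 1)).Nonempty := nonempty_range_add_one
  set ε : ℕ → ℝ := fun n => (range (n + 1)).sup' (hne n) fun k => |x k| * ((n : ℝ) + 1) ^ (-s)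
  have le_ε (n k : ℕ) (hk : k ≤ n) : |x k| * ((n : ℝ) + 1) ^ (-s) ≤ ε n :=
    le_sup' (fun k => |x k| * ((n : ℝ) + 1) ^ (-s)) (mem_range.2 (Nat.lt_succ_of_le hk))
  refine ⟨ε, ?_, le_ε⟩
  refine tendsto_order.2 ⟨fun η hη => .of_forall fun n =>
    hη.trans_le ((by positivity : 0 ≤ |x n| * ((n : ℝ) + 1) ^ (-s)).trans (le_ε n n le_rfl)),
    fun η hη => ?_⟩
  obtain ⟨n₀, hn₀⟩ := eventually_atTop.1 (Asymptotics.isLittleO_iff.1 hx (half_pos hη))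
  obtain ⟨C, -, initial⟩ := exists_forall_lt_abs_le x n₀
  have lim := (tendsto_natCast_add_one_rpow_neg hs).const_mul C
  rw [mul_zero] at lim
  filter_upwards [lim.eventually_lt_const hη] with n hn
  refine (sup'_lt_iff (hne n)).2 fun k hk => ?_
  rcases lt_or_ge k n₀ with hk₀ | hk₀
  · refine lt_of_le_of_lt ?_ hn
    gcongr
    exact initial k hk₀
  · have bound := hn₀ k hk₀
    rw [Real.norm_eq_abs, Real.norm_of_nonneg (by positivity)] at bound
    calc |x k| * ((n : ℝ) + 1) ^ (-s)
        ≤ η / 2 * ((n : ℝ) + 1) ^ s * ((n : ℝ) + 1) ^ (-s) := by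
          gcongr
          refine bound.trans ?_
          gcongr
          exact mod_cast Nat.lt_succ_iff.1 (mem_range.1 hk)
      _ = η / 2 := by
          rw [mul_assoc, ← Real.rpow_add (by positivity), add_neg_cancel, Real.rpow_zero, mul_one]
      _ < η := half_lt_self hη

/-- The inverse order of magnitude of the standard deviation of the size of a trie over `n`
labelings. -/
noncomputable def deviationScale (A M n : ℕ) : ℝ := ((n : ℝ) + 1) ^ (-(varianceExponent A M / 2))

/-- The difference between the `m`-th coefficient of the centred series and that of the
moment series of the centred normal variable with the same variance. -/
noncomputable def gaussDefect (R : ℕ → ℝ⟦X⟧) (m n : ℕ) : ℝ :=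
  coeff m (centredSeries R n) - coeff m (gaussSeries (seriesVariance R n))

/-- The centred series with its `m`-th coefficient replaced by the Gaussian one. -/
noncomputable def topGaussSeries (R : ℕ → ℝ⟦X⟧) (m n : ℕ) : ℝ⟦X⟧ :=
  centredSeries R n - C (gaussDefect R m n) * X ^ m

/-- The recursion of the centred series at one child of the root, applied to `H`. -/
noncomputable def childSeries (A M : ℕ) (R H : ℕ → ℝ⟦X⟧) (n : ℕ) : ℝ⟦X⟧ :=
  𝔼 c : Fin n → Fin A, expSeries (centredToll A M R n c) * ∏ a, H (fiberCard c a)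

lemma deviationScale_pos (A M n : ℕ) : 0 < deviationScale A M n :=
  Real.rpow_pos_of_pos n.cast_add_one_pos _

lemma deviationScale_pow (A M n j : ℕ) :
    deviationScale A M n ^ j = ((n : ℝ) + 1) ^ (-(j * varianceExponent A M / 2)) := by
  rw [deviationScale, ← Real.rpow_mul_natCast (by positivity)]
  ring_nf

lemma deviationScale_sq (A M n : ℕ) :
    deviationScale A M n ^ 2 = ((n : ℝ) + 1) ^ (-varianceExponent A M) := by
  rw [deviationScale_pow, Nat.cast_ofNat, mul_div_cancel_left₀ _ two_ne_zero]

lemma isLittleO_coeff_of_tendsto_truncNorm {A M m : ℕ} {f : ℕ → ℝ⟦X⟧}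
    (hf : Tendsto (fun n => truncNorm m (deviationScale A M n) (f n)) atTop (𝓝 0)) :
    (fun n => coeff m (f n))
      =o[atTop] fun n : ℕ => ((n : ℝ) + 1) ^ (m * varianceExponent A M / 2) := by
  refine Asymptotics.isLittleO_iff.2 fun η hη => ?_
  filter_upwards [hf.eventually_lt_const hη] with n hn
  have := (abs_coeff_mul_pow_le_truncNorm (deviationScale_pos A M n).le (f n) le_rfl).trans_lt hn
  rw [deviationScale_pow, Real.rpow_neg (by positivity), ← div_eq_mul_inv,
    div_lt_iff₀ (by positivity)] at this
  rw [Real.norm_eq_abs, Real.norm_of_nonneg (by positivity)]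
  exact this.le

lemma truncNorm_expSeries_mul_prod_sub_gaussSeries_le {m : ℕ} {t : ℝ} (ht : 0 ≤ t) {ι : Type*}
    (s : Finset ι) {a u B K ε : ℝ} {w : ι → ℝ} {H : ι → ℝ⟦X⟧} (hK : 1 ≤ K)
    (hH : ∀ i ∈ s, truncNorm m t (H i) ≤ K) (hw : ∀ i ∈ s, truncNorm m t (gaussSeries (w i)) ≤ K)
    (hε : ∀ i ∈ s, truncNorm m t (H i - gaussSeries (w i)) ≤ ε)
    (hsum : |∑ i ∈ s, w i| * t ^ 2 ≤ B) (hu : |u| * t ^ 2 ≤ B) :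
    truncNorm m t (expSeries a * ∏ i ∈ s, H i - gaussSeries u)
      ≤ truncNorm m t (expSeries a - 1) * K ^ #s + #s * K ^ #s * ε
        + Real.exp (3 * B) * (|∑ i ∈ s, w i - u| * t ^ 2) := by
  have split : expSeries a * ∏ i ∈ s, H i - gaussSeries u
      = (expSeries a - 1) * ∏ i ∈ s, H i + (∏ i ∈ s, H i - ∏ i ∈ s, gaussSeries (w i))
        + (gaussSeries (∑ i ∈ s, w i) - gaussSeries u) := by
    rw [addChar_sum_eq_prod]
    ring
  rw [split]
  refine (truncNorm_add_le ht _ _).trans (add_le_add ((truncNorm_add_le ht _ _).trans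
    (add_le_add ((truncNorm_mul_le ht _ _).trans ?_)
      (truncNorm_prod_sub_prod_le ht s hK hH hw hε)))
    (truncNorm_gaussSeries_sub_le ht hsum hu))
  exact mul_le_mul_of_nonneg_left (truncNorm_prod_le ht s hH) (truncNorm_nonneg ht _)

lemma truncNorm_le_add_of_sub {m : ℕ} {t : ℝ} (ht : 0 ≤ t) {f g : ℝ⟦X⟧} {a b : ℝ}
    (h : truncNorm m t (f - g) ≤ a) (hg : truncNorm m t g ≤ b) : truncNorm m t f ≤ a + b := by
  have := truncNorm_add_le (m := m) ht (f - g) g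
  rw [sub_add_cancel] at this
  linarith

namespace IsMomentSystem

variable {A M m : ℕ} {R : ℕ → ℝ⟦X⟧}

lemma varianceExponent_pos (S : IsMomentSystem A M R) : 0 < varianceExponent A M :=
  one_pos.trans S.one_lt_varianceExponent

lemma exists_seriesVariance_mul_deviationScale_sq_le (S : IsMomentSystem A M R) :
    ∃ B ≥ 0, ∀ n : ℕ, ∀ k ≤ n, seriesVariance R k * deviationScale A M n ^ 2 ≤ B := by
  obtain ⟨B, hB, growth⟩ := S.exists_seriesVariance_le
  refine ⟨B, hB, fun n k hk => ?_⟩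
  have := S.varianceExponent_pos
  rw [deviationScale_sq, Real.rpow_neg (by positivity), ← div_eq_mul_inv,
    div_le_iff₀ (by positivity)]
  refine (growth k).trans ?_
  gcongr

lemma abs_seriesVariance_div_mul_le (S : IsMomentSystem A M R) {n : ℕ} {b : ℝ} (hb : 0 ≤ b) :
    |seriesVariance R n / M| * b ≤ seriesVariance R n * b := by
  rw [abs_of_nonneg (div_nonneg (S.variance_nonneg n) M.cast_nonneg)]
  gcongr
  exact div_le_self (S.variance_nonneg n) (mod_cast S.one_lt_arity.le)

lemma tendsto_expect_truncNorm_expSeries_centredToll (S : IsMomentSystem A M R) (m : ℕ) :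
    Tendsto (fun n => 𝔼 c, truncNorm m (deviationScale A M n)
      (expSeries (centredToll A M R n c) - 1)) atTop (𝓝 0) := by
  choose C _ toll_moment using S.exists_expect_abs_centredToll_pow_le
  set ε : ℕ → ℝ := fun n => ((n : ℝ) + 1) ^ (-(varianceExponent A M / 2 - tollExponent A M))
  have lim : Tendsto (fun n => ∑ j ∈ range m, C j * ε n ^ (j + 1)) atTop (𝓝 0) := by
    have hε := tendsto_natCast_add_one_rpow_neg
      (show 0 < varianceExponent A M / 2 - tollExponent A M by
        linarith [S.two_mul_tollExponent_lt])
    rw [show (0 : ℝ) = ∑ j ∈ range m, C j * 0 ^ (j + 1) by simp]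
    exact tendsto_finsetSum (range m) fun j _ => (hε.pow (j + 1)).const_mul (C j)
  refine squeeze_zero
    (fun n => expect_nonneg fun c _ => truncNorm_nonneg (deviationScale_pos A M n).le _)
    (fun n => ?_) lim
  have hscale := deviationScale_pos A M n
  calc _ ≤ 𝔼 c : Fin n → Fin A, ∑ j ∈ range m,
        |centredToll A M R n c| ^ (j + 1) * deviationScale A M n ^ (j + 1) :=
        expect_le_expect fun c _ => truncNorm_expSeries_sub_one_le hscale.le _
    _ = ∑ j ∈ range m,
        (𝔼 c, |centredToll A M R n c| ^ (j + 1)) * deviationScale A M n ^ (j + 1) := by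
        simp only [expect_sum_comm, expect_mul]
    _ ≤ ∑ j ∈ range m, C j * (((n : ℝ) + 1) ^ tollExponent A M) ^ (j + 1)
          * deviationScale A M n ^ (j + 1) := by
        gcongr with j
        exact toll_moment j n
    _ = ∑ j ∈ range m, C j * ε n ^ (j + 1) := by
        refine sum_congr rfl fun j _ => ?_
        rw [mul_assoc, ← mul_pow, deviationScale, ← Real.rpow_add (by positivity),
          show tollExponent A M + -(varianceExponent A M / 2)
            = -(varianceExponent A M / 2 - tollExponent A M) by ring]

lemma tendsto_expect_abs_sum_seriesVariance_sub (S : IsMomentSystem A M R) :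
    Tendsto (fun n => 𝔼 c : Fin n → Fin A,
      |∑ a, seriesVariance R (fiberCard c a) - seriesVariance R n / M| * deviationScale A M n ^ 2)
      atTop (𝓝 0) := by
  refine S.isLittleO_expect_abs_sum_seriesVariance_sub.tendsto_div_nhds_zero.congr fun n => ?_
  rw [← expect_mul, deviationScale_sq, Real.rpow_neg (by positivity), div_eq_mul_inv]

lemma gaussDefect_zero (S : IsMomentSystem A M R) (n : ℕ) : gaussDefect R 0 n = 0 := by
  simp [gaussDefect, S.constantCoeff_centredSeries]

lemma gaussDefect_one (S : IsMomentSystem A M R) (n : ℕ) : gaussDefect R 1 n = 0 := by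
  simp [gaussDefect, S.coeff_one_centredSeries, coeff_gaussSeries]

lemma gaussDefect_two (R : ℕ → ℝ⟦X⟧) (n : ℕ) : gaussDefect R 2 n = 0 := by
  simp [gaussDefect, seriesVariance, coeff_gaussSeries]

lemma constantCoeff_topGaussSeries (S : IsMomentSystem A M R) (hm : 1 ≤ m) (n : ℕ) :
    constantCoeff (topGaussSeries R m n) = 1 := by
  simp [topGaussSeries, S.constantCoeff_centredSeries, Nat.ne_of_gt hm]

lemma coeff_topGaussSeries_sub (R : ℕ → ℝ⟦X⟧) (n : ℕ) {j : ℕ} (hj : j < m) :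
    coeff j (topGaussSeries R m n - gaussSeries (seriesVariance R n)) = gaussDefect R j n := by
  rw [topGaussSeries, gaussDefect, map_sub, map_sub, coeff_C_mul_X_pow, if_neg hj.ne, sub_zero,
    gaussDefect]

lemma coeff_self_topGaussSeries_sub (R : ℕ → ℝ⟦X⟧) (m n : ℕ) :
    coeff m (topGaussSeries R m n - gaussSeries (seriesVariance R n)) = 0 := by
  rw [topGaussSeries, gaussDefect, map_sub, map_sub, coeff_C_mul_X_pow, if_pos rfl]
  ring

lemma gaussDefect_eq_add (S : IsMomentSystem A M R) (hm : 1 ≤ m) (n : ℕ) :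
    gaussDefect R m n = M * A * binomialMean (A : ℝ)⁻¹ n (gaussDefect R m)
      + coeff m (childSeries A M R (topGaussSeries R m) n ^ M
        - gaussSeries (seriesVariance R n)) := by
  have top := (S.isTopPerturbation_centredSeries hm
    (fun k => .sub_C_mul_X_pow m (centredSeries R k) (gaussDefect R m k))
    (S.constantCoeff_topGaussSeries hm) n).coeff_eq
  rw [gaussDefect, top, map_sub, childSeries]
  simp only [topGaussSeries]
  ring

-- Only the coefficients below `m` contribute, and these are controlled by the induction hypothesis.
lemma exists_tendsto_truncNorm_topGaussSeries_sub_le (S : IsMomentSystem A M R)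
    (ih : ∀ j < m, gaussDefect R j
      =o[atTop] fun n : ℕ => ((n : ℝ) + 1) ^ (j * varianceExponent A M / 2)) :
    ∃ ε : ℕ → ℝ, Tendsto ε atTop (𝓝 0) ∧ ∀ n : ℕ, ∀ k ≤ n, truncNorm m (deviationScale A M n)
      (topGaussSeries R m k - gaussSeries (seriesVariance R k)) ≤ ε n := by
  have hρ := S.varianceExponent_pos
  have coefficientwise (j : ℕ) : ∃ ε : ℕ → ℝ, Tendsto ε atTop (𝓝 0) ∧
      (j < m → ∀ n : ℕ, ∀ k ≤ n, |gaussDefect R j k| * deviationScale A M n ^ j ≤ ε n) := by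
    rcases lt_or_ge j m with hj | hj
    · rcases j.eq_zero_or_pos with rfl | hj0
      · exact ⟨0, tendsto_const_nhds, by simp [S.gaussDefect_zero]⟩
      · obtain ⟨ε, hε, h⟩ := exists_tendsto_forall_le_abs_mul_le (by positivity) (ih j hj)
        exact ⟨ε, hε, fun _ n k hk => by rw [deviationScale_pow]; exact h n k hk⟩
    · exact ⟨0, tendsto_const_nhds, fun hj' => absurd hj hj'.not_ge⟩
  choose ε hε h using coefficientwise
  refine ⟨fun n => ∑ j ∈ range m, ε j n, by simpa using tendsto_finsetSum _ fun j _ => hε j,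
    fun n k hk => ?_⟩
  rw [truncNorm, sum_range_succ, coeff_self_topGaussSeries_sub, abs_zero, zero_mul, add_zero]
  refine sum_le_sum fun j hj => ?_
  rw [coeff_topGaussSeries_sub R k (mem_range.1 hj)]
  exact h j (mem_range.1 hj) n k hk

lemma truncNorm_childSeries_sub_le (S : IsMomentSystem A M R) {t B ε : ℝ} (ht : 0 ≤ t)
    {H : ℕ → ℝ⟦X⟧} {n : ℕ} (variance_le : ∀ k ≤ n, seriesVariance R k * t ^ 2 ≤ B)
    (hH : ∀ k ≤ n, truncNorm m t (H k - gaussSeries (seriesVariance R k)) ≤ ε) :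
    truncNorm m t (childSeries A M R H n - gaussSeries (seriesVariance R n / M))
      ≤ (𝔼 c, truncNorm m t (expSeries (centredToll A M R n c) - 1)) * (ε + Real.exp B) ^ A
        + A * (ε + Real.exp B) ^ A * ε
        + Real.exp (3 * (A * B)) * 𝔼 c : Fin n → Fin A,
          |∑ a, seriesVariance R (fiberCard c a) - seriesVariance R n / M| * t ^ 2 := by
  have := S.neZero_alphabet
  have hA : (1 : ℝ) ≤ A := mod_cast S.one_lt_alphabet.le
  have hB : 0 ≤ B :=
    (mul_nonneg (S.variance_nonneg n) (sq_nonneg t)).trans (variance_le n le_rfl)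
  have gauss_le (k : ℕ) (hk : k ≤ n) :
      truncNorm m t (gaussSeries (seriesVariance R k)) ≤ Real.exp B := by
    refine (truncNorm_gaussSeries_le _).trans (Real.exp_le_exp.2 ?_)
    rw [abs_of_nonneg (S.variance_nonneg k)]
    exact variance_le k hk
  have ε_nonneg : 0 ≤ ε := (truncNorm_nonneg ht _).trans (hH n le_rfl)
  have variance_div_le : |seriesVariance R n / M| * t ^ 2 ≤ A * B :=
    (S.abs_seriesVariance_div_mul_le (sq_nonneg t)).trans
      ((variance_le n le_rfl).trans (le_mul_of_one_le_left hB hA))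
  have sum_variance_le (c : Fin n → Fin A) :
      |∑ a, seriesVariance R (fiberCard c a)| * t ^ 2 ≤ A * B := by
    rw [abs_of_nonneg (sum_nonneg fun _ _ => S.variance_nonneg _), sum_mul]
    simpa using sum_le_sum (s := univ) fun a _ => variance_le _ (fiberCard_le c a)
  have pointwise (c : Fin n → Fin A) :=
    truncNorm_expSeries_mul_prod_sub_gaussSeries_le (a := centredToll A M R n c) ht univ
      (le_add_of_nonneg_of_le ε_nonneg (Real.one_le_exp hB))
      (fun a _ => truncNorm_le_add_of_sub ht (hH _ (fiberCard_le c a))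
        (gauss_le _ (fiberCard_le c a)))
      (fun a _ => (gauss_le _ (fiberCard_le c a)).trans (le_add_of_nonneg_left ε_nonneg))
      (fun a _ => hH _ (fiberCard_le c a)) (sum_variance_le c) variance_div_le
  simp only [card_univ, Fintype.card_fin] at pointwise
  rw [childSeries, ← Fintype.expect_const (ι := Fin n → Fin A) (gaussSeries _),
    ← expect_sub_distrib, mul_expect, expect_mul, ← Fintype.expect_const (ι := Fin n → Fin A)
      (_ * _ * ε), ← expect_add_distrib, ← expect_add_distrib]
  exact (truncNorm_expect_le ht _ _).trans (expect_le_expect fun c _ => pointwise c)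

lemma tendsto_truncNorm_childSeries_sub (S : IsMomentSystem A M R) {H : ℕ → ℝ⟦X⟧} {ε : ℕ → ℝ}
    (hε : Tendsto ε atTop (𝓝 0))
    (hH : ∀ n : ℕ, ∀ k ≤ n,
      truncNorm m (deviationScale A M n) (H k - gaussSeries (seriesVariance R k)) ≤ ε n) :
    Tendsto (fun n => truncNorm m (deviationScale A M n)
      (childSeries A M R H n - gaussSeries (seriesVariance R n / M))) atTop (𝓝 0) := by
  obtain ⟨B, -, variance_le⟩ := S.exists_seriesVariance_mul_deviationScale_sq_le
  have hK := (hε.add_const (Real.exp B)).pow A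
  have lim := (((S.tendsto_expect_truncNorm_expSeries_centredToll m).mul hK).add
    ((hK.const_mul (A : ℝ)).mul hε)).add
      (S.tendsto_expect_abs_sum_seriesVariance_sub.const_mul (Real.exp (3 * (A * B))))
  simp only [zero_mul, mul_zero, add_zero] at lim
  have ht (n : ℕ) : 0 ≤ deviationScale A M n := (deviationScale_pos A M n).le
  exact squeeze_zero (fun n => truncNorm_nonneg (ht n) _)
    (fun n => S.truncNorm_childSeries_sub_le (ht n) (variance_le n) (hH n)) lim

lemma tendsto_truncNorm_childSeries_pow_sub (S : IsMomentSystem A M R) {H : ℕ → ℝ⟦X⟧}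
    (h : Tendsto (fun n => truncNorm m (deviationScale A M n)
      (childSeries A M R H n - gaussSeries (seriesVariance R n / M))) atTop (𝓝 0)) :
    Tendsto (fun n => truncNorm m (deviationScale A M n)
      (childSeries A M R H n ^ M - gaussSeries (seriesVariance R n))) atTop (𝓝 0) := by
  have hM : (M : ℝ) ≠ 0 := have := S.neZero_arity; NeZero.ne _
  obtain ⟨B, hB, variance_le⟩ := S.exists_seriesVariance_mul_deviationScale_sq_le
  set ε := fun n => truncNorm m (deviationScale A M n)
    (childSeries A M R H n - gaussSeries (seriesVariance R n / M))
  have lim := (((h.add_const (Real.exp B)).pow M).const_mul (M : ℝ)).mul h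
  rw [mul_zero] at lim
  refine squeeze_zero (fun n => truncNorm_nonneg (deviationScale_pos A M n).le _) (fun n => ?_) lim
  set t := deviationScale A M n
  have ht : 0 ≤ t := (deviationScale_pos A M n).le
  have gauss_le : truncNorm m t (gaussSeries (seriesVariance R n / M)) ≤ Real.exp B :=
    (truncNorm_gaussSeries_le _).trans (Real.exp_le_exp.2 ((S.abs_seriesVariance_div_mul_le
      (sq_nonneg t)).trans (variance_le n n le_rfl)))
  have ε_nonneg : 0 ≤ ε n := truncNorm_nonneg ht _
  have gauss_pow : gaussSeries (seriesVariance R n) = gaussSeries (seriesVariance R n / M) ^ M := by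
    rw [← AddChar.map_nsmul_eq_pow, nsmul_eq_mul, mul_div_cancel₀ _ hM]
  have := truncNorm_prod_sub_prod_le (m := m) ht (range M) (f := fun _ => childSeries A M R H n)
    (g := fun _ => gaussSeries (seriesVariance R n / M)) (B := ε n + Real.exp B) (ε := ε n)
    (le_add_of_nonneg_of_le ε_nonneg (Real.one_le_exp hB))
    (fun _ _ => truncNorm_le_add_of_sub ht le_rfl gauss_le)
    (fun _ _ => gauss_le.trans (le_add_of_nonneg_left ε_nonneg)) (fun _ _ => le_rfl)
  rwa [prod_const, prod_const, card_range, ← gauss_pow] at this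

lemma isLittleO_gaussDefect (S : IsMomentSystem A M R) (m : ℕ) :
    gaussDefect R m =o[atTop] fun n : ℕ => ((n : ℝ) + 1) ^ (m * varianceExponent A M / 2) := by
  induction m using Nat.strong_induction_on with
  | _ m ih =>
    rcases lt_or_ge m 3 with hm | hm
    · have : gaussDefect R m = 0 := funext fun n => by
        interval_cases m
        exacts [S.gaussDefect_zero n, S.gaussDefect_one n, gaussDefect_two R n]
      rw [this]
      exact Asymptotics.isLittleO_zero _ _
    · obtain ⟨ε, hε, hH⟩ := S.exists_tendsto_truncNorm_topGaussSeries_sub_le ih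
      have hρ := S.varianceExponent_pos
      have hm' : (3 : ℝ) ≤ m := mod_cast hm
      refine isLittleO_of_le_binomialMean S.inv_alphabet_pos S.inv_alphabet_lt_one
        (K := M * A) (by linarith [(by positivity : 0 ≤ m * varianceExponent A M / 2)])
        (by positivity) (S.mul_inv_rpow_lt_one (by nlinarith))
        (isLittleO_coeff_of_tendsto_truncNorm (S.tendsto_truncNorm_childSeries_pow_sub
          (S.tendsto_truncNorm_childSeries_sub hε hH))) fun n => ?_
      conv_lhs => rw [S.gaussDefect_eq_add (by lia) n]
      refine (abs_add_le _ _).trans (add_le_add_left ?_ _)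
      rw [abs_mul, abs_of_nonneg (by positivity : (0 : ℝ) ≤ M * A)]
      gcongr
      exact abs_binomialMean_le S.inv_alphabet_pos.le S.inv_alphabet_lt_one.le _ _

end IsMomentSystem

/-! ### Truncated labelings -/

section Averages

variable {ι Λ : Type*} [Fintype ι] [DecidableEq ι] [Fintype Λ]

lemma expect_arrow_prod {K κ : Type*} [AddCommMonoid K] [Module ℚ≥0 K] [Fintype κ]
    (h : (ι → κ × Λ) → K) :
    𝔼 y, h y = 𝔼 c : ι → κ, 𝔼 z : ι → Λ, h (fun l => (c l, z l)) := by
  rw [Fintype.expect_equiv (Equiv.arrowProdEquivProdArrow ι (fun _ => κ) fun _ => Λ) h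
    (fun p => h fun l => (p.1 l, p.2 l)) fun _ => rfl, ← univ_product_univ, expect_product]

lemma expect_colouring_equivFin {K : Type*} [CommSemiring K] [Module ℚ≥0 K] {A : ℕ} (f : ℕ → K) :
    𝔼 c : ι → Fin A, ∏ a, f (Fintype.card {l // c l = a})
      = 𝔼 c : Fin (Fintype.card ι) → Fin A, ∏ a, f (fiberCard c a) := by
  let e := Fintype.equivFin ι
  refine Fintype.expect_equiv (e.arrowCongr (.refl _)) _ _ fun c => prod_congr rfl fun a _ => ?_
  exact congrArg f (Fintype.card_congr (e.subtypeEquiv fun l => by simp))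

variable {K : Type*} [CommSemiring K] [Module ℚ≥0 K] [IsScalarTower ℚ≥0 K K] [SMulCommClass ℚ≥0 K K]

lemma prod_expect {κ : Type*} [Fintype κ] [DecidableEq κ] {Λ : κ → Type*} [∀ a, Fintype (Λ a)]
    (g : ∀ a, Λ a → K) : ∏ a, 𝔼 w, g a w = 𝔼 w : ∀ a, Λ a, ∏ a, g a (w a) := by
  simp only [expect, prod_smul, prod_inv_distrib, prod_univ_sum, Fintype.piFinset_univ, card_univ,
    Fintype.card_pi, Nat.cast_prod]

lemma expect_prod_fiber {κ : Type*} [Fintype κ] [DecidableEq κ] (c : ι → κ)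
    (g : (a : κ) → ({l // c l = a} → Λ) → K) :
    𝔼 z : ι → Λ, ∏ a, g a (fun l => z l) = ∏ a, 𝔼 w, g a w := by
  rw [prod_expect]
  exact Fintype.expect_equiv
    (((Equiv.sigmaFiberEquiv c).symm.arrowCongr (.refl Λ)).trans (.piCurry fun _ _ => Λ))
    _ _ fun _ => rfl

lemma expect_prod_comp_eval {κ : Type*} [Fintype κ] [DecidableEq κ] (h : (ι → Λ) → K) :
    𝔼 x : ι → κ → Λ, ∏ i, h (fun l => x l i) = (𝔼 y, h y) ^ Fintype.card κ := by
  rw [← card_univ, ← prod_const, prod_expect]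
  exact Fintype.expect_equiv (Equiv.piComm fun _ _ => Λ) _ _ fun _ => rfl

end Averages

/-- The restrictions of labelings of the `M`-ary tree to the words of length at most `d`,
in recursive form: a letter and a shallower labeling for each child of the root. -/
def TruncLabeling (M A : ℕ) : ℕ → Type
  | 0 => Unit
  | d + 1 => Fin M → Fin A × TruncLabeling M A d

noncomputable instance TruncLabeling.instFintype (M A : ℕ) : (d : ℕ) → Fintype (TruncLabeling M A d)
  | 0 => inferInstanceAs (Fintype Unit)
  | d + 1 =>
    haveI := TruncLabeling.instFintype M A d
    inferInstanceAs (Fintype (Fin M → Fin A × TruncLabeling M A d))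

/-- The number of words of length less than `d` that occur in at least two of the labelings
`x l`, computed along the recursive structure of the trie. -/
noncomputable def truncSize (M A : ℕ) :
    (d : ℕ) → (ι : Type) → [Fintype ι] → (ι → TruncLabeling M A d) → ℕ
  | 0 => fun _ _ _ => 0
  | d + 1 => fun ι _ x => (if 2 ≤ Fintype.card ι then 1 else 0) +
      ∑ i : Fin M, ∑ a : Fin A, truncSize M A d {l // (x l i).1 = a} fun l => (x l i).2

/-- The moment generating series of `truncSize` for `n` independent uniform labelings, given by the
recursion that it satisfies. -/
noncomputable def truncSeries (M A : ℕ) : ℕ → ℕ → ℝ⟦X⟧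
  | 0, _ => 1
  | d + 1, n =>
    expSeries (toll n) * (𝔼 c : Fin n → Fin A, ∏ a, truncSeries M A d (fiberCard c a)) ^ M

section TruncSeries

variable {M A : ℕ}

lemma expSeries_truncSize_succ (d : ℕ) {ι : Type} [Fintype ι] (x : ι → TruncLabeling M A (d + 1)) :
    expSeries (truncSize M A (d + 1) ι x) = expSeries (toll (Fintype.card ι)) *
      ∏ i, ∏ a, expSeries (truncSize M A d {l // (x l i).1 = a} fun l => (x l i).2) := by
  simp only [← addChar_sum_eq_prod, ← AddChar.map_add_eq_mul]
  congr 1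
  push_cast [truncSize, toll]
  rfl

theorem expect_expSeries_truncSize (d : ℕ) (ι : Type) [Fintype ι] [DecidableEq ι] :
    𝔼 x : ι → TruncLabeling M A d, expSeries (truncSize M A d ι x)
      = truncSeries M A d (Fintype.card ι) := by
  induction d generalizing ι with
  | zero =>
    have : Fintype.card (TruncLabeling M A 0) = 1 := Fintype.card_unit
    simp [truncSize, truncSeries, expect, this]
  | succ d ih =>
    let h (y : ι → Fin A × TruncLabeling M A d) : ℝ⟦X⟧ :=
      ∏ a, expSeries (truncSize M A d {l // (y l).1 = a} fun l => (y l).2)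
    simp only [expSeries_truncSize_succ]
    rw [← mul_expect, truncSeries, ← expect_colouring_equivFin]
    congr 1
    refine (expect_prod_comp_eval h).trans ?_
    rw [Fintype.card_fin, expect_arrow_prod]
    congr 1
    refine expect_congr rfl fun c _ => ?_
    refine (expect_prod_fiber c fun a w => expSeries (truncSize M A d {l // c l = a} w)).trans ?_
    simp only [ih]

lemma truncSeries_of_le_one [NeZero A] (d : ℕ) {n : ℕ} (hn : n ≤ 1) : truncSeries M A d n = 1 := by
  induction d generalizing n with
  | zero => rfl
  | succ d ih =>
    have children (c : Fin n → Fin A) : ∏ a, truncSeries M A d (fiberCard c a) = 1 :=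
      prod_eq_one fun a _ => ih ((fiberCard_le c a).trans hn)
    simp [truncSeries, children, toll, show ¬2 ≤ n by omega]

lemma constantCoeff_truncSeries [NeZero A] (d n : ℕ) : constantCoeff (truncSeries M A d n) = 1 := by
  induction d generalizing n with
  | zero => simp [truncSeries]
  | succ d ih =>
    simp [truncSeries, constantCoeff_expect_eq_one, map_prod, ih]

/-- The generating series `truncSeries M A d` with the coefficient of `X ^ m` removed. -/
noncomputable def punctured (M A m d n : ℕ) : ℝ⟦X⟧ :=
  truncSeries M A d n - C (coeff m (truncSeries M A d n)) * X ^ m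

lemma coeff_truncSeries_succ [NeZero A] {m : ℕ} (hm : 1 ≤ m) (d n : ℕ) :
    coeff m (truncSeries M A (d + 1) n)
      = coeff m (expSeries (toll n) *
          (𝔼 c : Fin n → Fin A, ∏ a, punctured M A m d (fiberCard c a)) ^ M)
        + M * A * binomialMean (A : ℝ)⁻¹ n (fun k => coeff m (truncSeries M A d k)) := by
  have constantCoeff_punctured (k : ℕ) : constantCoeff (punctured M A m d k) = 1 := by
    simp [punctured, constantCoeff_truncSeries, (zero_lt_one.trans_le hm).ne']
  have average := IsTopPerturbation.expect (s := univ) fun (c : Fin n → Fin A) _ =>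
    IsTopPerturbation.prod hm univ
      (fun a _ => IsTopPerturbation.sub_C_mul_X_pow m (truncSeries M A d (fiberCard c a))
        (coeff m (truncSeries M A d (fiberCard c a))))
      fun a _ => constantCoeff_punctured (fiberCard c a)
  rw [expect_sum_fiberCard n fun k => coeff m (truncSeries M A d k)] at average
  have constantCoeff_average := constantCoeff_expect_eq_one (ι := Fin n → Fin A)
    (f := fun c => ∏ a, punctured M A m d (fiberCard c a))
    (by simp [map_prod, constantCoeff_punctured])
  have := ((IsTopPerturbation.refl m (expSeries (toll n))).mul hm
    (average.pow hm constantCoeff_average M) (constantCoeff_expSeries _)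
    ((map_pow _ _ _).trans ((congrArg (· ^ M) constantCoeff_average).trans (one_pow M)))).coeff_eq
  rw [truncSeries, this]
  simp only [zero_add, mul_assoc]
  rfl

lemma abs_le_of_le_add_binomialMean {q K C : ℝ} (h0 : 0 ≤ q) (h1 : q ≤ 1) (hK : 0 ≤ K)
    (hKq : K * q ^ 2 < 1) (hC : 0 ≤ C) {N : ℕ} {x : ℕ → ℕ → ℝ} (hx : ∀ n, x 0 n = 0)
    (hx1 : ∀ d, ∀ n ≤ 1, x d n = 0)
    (hstep : ∀ d n, 2 ≤ n → n ≤ N → |x (d + 1) n| ≤ C + K * binomialMean q n fun k => |x d k|)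
    (d : ℕ) {n : ℕ} (hn : n ≤ N) : |x d n| ≤ C / (1 - K * q ^ 2) * (n * (n - 1)) := by
  have hpos : 0 < 1 - K * q ^ 2 := sub_pos.2 hKq
  set D := C / (1 - K * q ^ 2) with hD
  have : 0 ≤ D := by positivity
  induction d generalizing n with
  | zero =>
    rcases n with _ | n
    · simp [hx]
    · simp only [hx, abs_zero]
      push_cast
      rw [add_sub_cancel_right]
      positivity
  | succ d ih =>
    rcases Nat.lt_or_ge n 2 with h2 | h2
    · interval_cases n <;> simp [hx1]
    have children : binomialMean q n (fun k => |x d k|) ≤ D * (n * (n - 1) * q ^ 2) := by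
      rw [← binomialMean_natCast_mul_pred, ← binomialMean_const_mul]
      exact binomialMean_mono h0 h1 fun k hk => ih (hk.trans hn)
    have hn2 : (2 : ℝ) ≤ n := by exact_mod_cast h2
    have absorb : C ≤ C * (n * (n - 1)) := le_mul_of_one_le_right hC (by nlinarith)
    calc |x (d + 1) n| ≤ C + K * binomialMean q n fun k => |x d k| := hstep d n h2 hn
      _ ≤ C * (n * (n - 1)) + K * (D * (n * (n - 1) * q ^ 2)) := by gcongr
      _ = D * (n * (n - 1)) := by
        rw [hD]
        field_simp
        ring

lemma exists_truncNorm_punctured_le {m : ℕ} (N : ℕ)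
    (h : ∀ j < m, ∀ n, ∃ K, ∀ d, |coeff j (truncSeries M A d n)| ≤ K) :
    ∃ K, ∀ d, ∀ n ≤ N, truncNorm m 1 (punctured M A m d n) ≤ K := by
  choose! b hb using h
  refine ⟨∑ n ∈ range (N + 1), ∑ j ∈ range m, b j n, fun d n hn => ?_⟩
  have b_nonneg (k : ℕ) : 0 ≤ ∑ j ∈ range m, b j k := sum_nonneg fun j hj =>
    (abs_nonneg _).trans (hb j (mem_range.1 hj) k 0)
  calc truncNorm m 1 (punctured M A m d n) = ∑ j ∈ range m, |coeff j (truncSeries M A d n)| := by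
        rw [truncNorm, sum_range_succ]
        simp only [punctured, map_sub, coeff_C_mul, coeff_X_pow_self, mul_one, sub_self, abs_zero,
          one_pow, add_zero]
        refine sum_congr rfl fun j hj => ?_
        rw [coeff_X_pow, if_neg (mem_range.1 hj).ne, mul_zero, sub_zero]
    _ ≤ ∑ j ∈ range m, b j n := sum_le_sum fun j hj => hb j (mem_range.1 hj) n d
    _ ≤ _ := single_le_sum (f := fun k => ∑ j ∈ range m, b j k) (fun k _ => b_nonneg k)
      (mem_range.2 (by omega))

lemma abs_coeff_expSeries_toll_mul_punctured_le [NeZero A] {m d k : ℕ} {K : ℝ} (hk : 2 ≤ k)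
    (hK : ∀ l ≤ k, truncNorm m 1 (punctured M A m d l) ≤ K) :
    |coeff m (expSeries (toll k) *
        (𝔼 c : Fin k → Fin A, ∏ a, punctured M A m d (fiberCard c a)) ^ M)|
      ≤ truncNorm m 1 (expSeries 1) * (K ^ A) ^ M := by
  set f := 𝔼 c : Fin k → Fin A, ∏ a, punctured M A m d (fiberCard c a)
  have average : truncNorm m 1 f ≤ K ^ A := by
    refine (truncNorm_expect_le zero_le_one _ _).trans (expect_le univ_nonempty fun c _ => ?_)
    simpa using truncNorm_prod_le zero_le_one univ fun a _ => hK _ (fiberCard_le c a)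
  have power : truncNorm m 1 (f ^ M) ≤ (K ^ A) ^ M := by
    simpa using truncNorm_prod_le zero_le_one (range M) fun _ _ => average
  have toll_eq : toll k = 1 := if_pos hk
  calc |coeff m (expSeries (toll k) * f ^ M)|
      ≤ truncNorm m 1 (expSeries 1 * f ^ M) := by
        simpa [toll_eq] using
          abs_coeff_mul_pow_le_truncNorm zero_le_one (expSeries 1 * f ^ M) le_rfl
    _ ≤ truncNorm m 1 (expSeries 1) * (K ^ A) ^ M := (truncNorm_mul_le zero_le_one _ _).trans
        (mul_le_mul_of_nonneg_left power (truncNorm_nonneg zero_le_one _))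

theorem exists_abs_coeff_truncSeries_le (hM : 1 < M) (hMA : M < A) (m n : ℕ) :
    ∃ K, ∀ d, |coeff m (truncSeries M A d n)| ≤ K := by
  have hA : NeZero A := ⟨by omega⟩
  induction m using Nat.strong_induction_on generalizing n with
  | _ m ih =>
    rcases Nat.eq_zero_or_pos m with rfl | hm
    · exact ⟨1, fun d => by simp [constantCoeff_truncSeries]⟩
    obtain ⟨K, hK⟩ := exists_truncNorm_punctured_le n ih
    have hA0 : (0 : ℝ) < A := by exact_mod_cast Nat.pos_of_neZero A
    have q_nonneg : (0 : ℝ) ≤ (A : ℝ)⁻¹ := by positivity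
    have q_le_one : (A : ℝ)⁻¹ ≤ 1 := inv_le_one_of_one_le₀ (by exact_mod_cast Nat.pos_of_neZero A)
    refine ⟨_, fun d => abs_le_of_le_add_binomialMean (K := M * A)
      (C := |truncNorm m 1 (expSeries 1) * (K ^ A) ^ M|) (N := n)
      (x := fun d n => coeff m (truncSeries M A d n)) q_nonneg q_le_one (by positivity) ?_
      (abs_nonneg _) ?_ ?_ ?_ d le_rfl⟩
    · have : (M : ℝ) < A := by exact_mod_cast hMA
      field_simp
      exact this
    · exact fun k => by simp [truncSeries, coeff_one, hm.ne']
    · exact fun d k hk => by simp [truncSeries_of_le_one d hk, coeff_one, hm.ne']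
    · intro d k hk hkn
      have lower_order := abs_coeff_expSeries_toll_mul_punctured_le (M := M) hk
        fun l hl => hK d l (hl.trans hkn)
      simp only [coeff_truncSeries_succ hm]
      refine (abs_add_le _ _).trans (add_le_add (lower_order.trans (le_abs_self _)) ?_)
      rw [abs_mul, abs_of_nonneg (by positivity)]
      exact mul_le_mul_of_nonneg_left (abs_binomialMean_le q_nonneg q_le_one _ _) (by positivity)

end TruncSeries

/-! ### Restricting labelings to finite depth -/

section Restriction

variable {M A : ℕ}

/-- The restriction of the labeling `L` to the words of length at most `d`. -/
def TruncLabeling.restrict : (d : ℕ) → (List (Fin M) → Fin A) → TruncLabeling M A d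
  | 0, _ => ()
  | d + 1, L => fun i => (L [i], restrict d fun w => L (i :: w))

/-- The words of length less than `d` that occur in at least two of the labelings `Ls`. -/
def truncTrie (d : ℕ) {ι : Type*} (Ls : ι → List (Fin M) → Fin A) : Set (List (Fin M × Fin A)) :=
  {w | 2 ≤ Nat.card {l // Occurs (Ls l) w} ∧ w.length < d}

/-- The labelings, among those carrying the letter `p.2` at the child `p.1` of the root,
seen from that child. -/
def childLabelings {ι : Type*} (Ls : ι → List (Fin M) → Fin A) (p : Fin M × Fin A) :
    {l // Ls l [p.1] = p.2} → List (Fin M) → Fin A :=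
  fun l v => Ls l (p.1 :: v)

lemma occurs_nil (L : List (Fin M) → Fin A) : Occurs L [] := fun t => t.elim0

lemma occurs_cons_iff (L : List (Fin M) → Fin A) (p : Fin M × Fin A) (w : List (Fin M × Fin A)) :
    Occurs L (p :: w) ↔ L [p.1] = p.2 ∧ Occurs (fun v => L (p.1 :: v)) w := by
  simp [Occurs, Fin.forall_fin_succ]

lemma card_occurs_cons {ι : Type*} (Ls : ι → List (Fin M) → Fin A) (p : Fin M × Fin A)
    (w : List (Fin M × Fin A)) :
    Nat.card {l // Occurs (Ls l) (p :: w)} = Nat.card {l // Occurs (childLabelings Ls p l) w} :=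
  Nat.card_congr ((Equiv.subtypeEquivRight fun l => occurs_cons_iff (Ls l) p w).trans
    (Equiv.subtypeSubtypeEquivSubtypeInter (fun l => Ls l [p.1] = p.2)
      fun l => Occurs (fun v => Ls l (p.1 :: v)) w).symm)

lemma finite_truncTrie (d : ℕ) {ι : Type*} (Ls : ι → List (Fin M) → Fin A) :
    (truncTrie d Ls).Finite :=
  (List.finite_length_lt _ d).subset fun _ hw => hw.2

lemma nil_mem_truncTrie_iff (d : ℕ) {ι : Type*} (Ls : ι → List (Fin M) → Fin A) :
    [] ∈ truncTrie (d + 1) Ls ↔ 2 ≤ Nat.card ι := by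
  have : Nat.card {l // Occurs (Ls l) []} = Nat.card ι :=
    Nat.card_congr (Equiv.subtypeUnivEquiv fun l => occurs_nil (Ls l))
  simp [truncTrie, this]

lemma cons_mem_truncTrie_iff (d : ℕ) {ι : Type*} (Ls : ι → List (Fin M) → Fin A)
    (p : Fin M × Fin A) (w : List (Fin M × Fin A)) :
    p :: w ∈ truncTrie (d + 1) Ls ↔ w ∈ truncTrie d (childLabelings Ls p) := by
  simp only [truncTrie, Set.mem_ofPred_eq, card_occurs_cons, List.length_cons,
    Nat.add_lt_add_iff_right]

/-- The trie consists of its root, if present, and of the subtries at the children. -/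
def truncTrieEquiv (d : ℕ) {ι : Type*} (Ls : ι → List (Fin M) → Fin A) :
    truncTrie (d + 1) Ls ≃
      {_u : Unit // 2 ≤ Nat.card ι} ⊕ (Σ p, truncTrie d (childLabelings Ls p)) where
  toFun
    | ⟨[], h⟩ => .inl ⟨(), (nil_mem_truncTrie_iff d Ls).1 h⟩
    | ⟨p :: w, h⟩ => .inr ⟨p, w, (cons_mem_truncTrie_iff d Ls p w).1 h⟩
  invFun
    | .inl u => ⟨[], (nil_mem_truncTrie_iff d Ls).2 u.2⟩
    | .inr ⟨p, w⟩ => ⟨p :: w.1, (cons_mem_truncTrie_iff d Ls p w.1).2 w.2⟩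
  left_inv := by rintro ⟨_ | ⟨p, w⟩, h⟩ <;> rfl
  right_inv := by rintro (⟨⟨⟩, h⟩ | ⟨p, w, h⟩) <;> rfl

theorem truncSize_restrict (d : ℕ) (ι : Type) [Fintype ι] (Ls : ι → List (Fin M) → Fin A) :
    truncSize M A d ι (fun l => .restrict d (Ls l)) = (truncTrie d Ls).ncard := by
  induction d generalizing ι with
  | zero => simp [truncSize, truncTrie]
  | succ d ih =>
    have (p : Fin M × Fin A) : Finite (truncTrie d (childLabelings Ls p)) := finite_truncTrie d _
    rw [← Nat.card_coe_set_eq, Nat.card_congr (truncTrieEquiv d Ls), Nat.card_sum, Nat.card_sigma,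
      Fintype.sum_prod_type, truncSize]
    refine congrArg₂ (· + ·) ?_ (sum_congr rfl fun i _ => sum_congr rfl fun a _ => ?_)
    · split_ifs with h <;> simp [h]
    · exact (ih _ (childLabelings Ls (i, a))).trans (Nat.card_coe_set_eq _).symm

namespace TruncLabeling

lemma restrict_update_nil (d : ℕ) (L : List (Fin M) → Fin A) (a : Fin A) :
    restrict d (Function.update L [] a) = restrict d L := by
  cases d with
  | zero => rfl
  | succ d =>
    funext i
    simp [restrict]

lemma restrict_surjective [NeZero A] (d : ℕ) :
    Function.Surjective (restrict d : (List (Fin M) → Fin A) → TruncLabeling M A d) := by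
  induction d with
  | zero => exact fun x => ⟨0, rfl⟩
  | succ d ih =>
    intro x
    choose g hg using ih
    refine ⟨fun
      | [] => 0
      | i :: v => Function.update (g (x i).2) [] (x i).1 v, ?_⟩
    funext i
    exact Prod.ext (by simp [restrict]) ((restrict_update_nil d _ _).trans (hg _))

lemma restrict_succ_eq_iff (d : ℕ) (L L' : List (Fin M) → Fin A) :
    restrict (d + 1) L = restrict (d + 1) L' ↔ ∀ i, L [i] = L' [i] ∧
      restrict d (fun w => L (i :: w)) = restrict d (fun w => L' (i :: w)) :=
  funext_iff.trans (forall_congr' fun _ => Prod.ext_iff)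

lemma exists_finset_restrict_eq_iff (M A d : ℕ) : ∃ s : Finset (List (Fin M)),
    ∀ L L' : List (Fin M) → Fin A, restrict d L = restrict d L' ↔ ∀ w ∈ s, L w = L' w := by
  induction d with
  | zero => exact ⟨∅, fun L L' => iff_of_true rfl (by simp)⟩
  | succ d ih =>
    obtain ⟨s, hs⟩ := ih
    refine ⟨univ.biUnion fun i => insert [i] (s.image (i :: ·)), fun L L' => ?_⟩
    simp only [restrict_succ_eq_iff, hs, mem_biUnion, mem_univ, true_and, mem_insert, mem_image]
    constructor
    · rintro h w ⟨i, rfl | ⟨v, hv, rfl⟩⟩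
      exacts [(h i).1, (h i).2 v hv]
    · exact fun h i => ⟨h _ ⟨i, .inl rfl⟩, fun v hv => h _ ⟨i, .inr ⟨v, hv, rfl⟩⟩⟩

end TruncLabeling

end Restriction

/-! ### The size of a random trie as a limit of truncated sizes -/

namespace TruncLabeling

variable {M A : ℕ}

instance (d : ℕ) : MeasurableSpace (TruncLabeling M A d) := ⊤

instance (d : ℕ) : DiscreteMeasurableSpace (TruncLabeling M A d) := ⟨fun _ => trivial⟩

lemma measurable_restrict (d : ℕ) :
    Measurable (restrict d : (List (Fin M) → Fin A) → TruncLabeling M A d) := by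
  obtain ⟨s, hs⟩ := exists_finset_restrict_eq_iff M A d
  refine measurable_to_countable fun L => ?_
  have cylinder : restrict d ⁻¹' {restrict d L} = ⋂ w ∈ s, {L' | L' w = L w} := by
    ext L'
    simp [hs]
  rw [cylinder]
  exact Finset.measurableSet_biInter _ fun w _ =>
    measurableSet_eq_fun (measurable_pi_apply w) measurable_const

lemma measurable_restrict_pi (d n : ℕ) :
    Measurable fun (Ls : Fin n → List (Fin M) → Fin A) l => restrict d (Ls l) :=
  measurable_pi_lambda _ fun l => (measurable_restrict d).comp (measurable_pi_apply l)

variable [NeZero A] {μL : Measure (List (Fin M) → Fin A)} [IsProbabilityMeasure μL]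

lemma map_restrict_singleton (hμL : IsLabelingMeasure (fun _ => (A : ℝ)⁻¹) μL) (d : ℕ)
    (x : TruncLabeling M A d) :
    μL.map (restrict d) {x} = (Fintype.card (TruncLabeling M A d) : ENNReal)⁻¹ := by
  obtain ⟨s, hs⟩ := exists_finset_restrict_eq_iff M A d
  have cylinder (x : TruncLabeling M A d) :
      μL.map (restrict d) {x} = ENNReal.ofReal (A : ℝ)⁻¹ ^ #s := by
    obtain ⟨L, rfl⟩ := restrict_surjective d x
    have : restrict d ⁻¹' {restrict d L} = {L' | ∀ w ∈ s, L' w = L w} := by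
      ext L'
      simp [hs]
    rw [Measure.map_apply (measurable_restrict d) (.of_discrete), this, hμL s L, prod_const]
  have total := sum_measure_singleton (μ := μL.map (restrict d)) (s := univ)
  have := Measure.isProbabilityMeasure_map (measurable_restrict d).aemeasurable (μ := μL)
  simp only [cylinder, sum_const, card_univ, coe_univ, measure_univ, nsmul_eq_mul] at total
  rw [cylinder]
  exact ENNReal.eq_inv_of_mul_eq_one_left (by rwa [mul_comm])

lemma integral_restrict_pi (hμL : IsLabelingMeasure (fun _ => (A : ℝ)⁻¹) μL) (d n : ℕ)
    (f : (Fin n → TruncLabeling M A d) → ℝ) :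
    ∫ Ls, f (fun l => restrict d (Ls l)) ∂(Measure.pi fun _ => μL) = 𝔼 x, f x := by
  have := Measure.isProbabilityMeasure_map (measurable_restrict d).aemeasurable (μ := μL)
  rw [← integral_map (measurable_restrict_pi d n).aemeasurable
    (measurable_of_finite f).aestronglyMeasurable,
    Measure.pi_map_pi fun _ => (measurable_restrict d).aemeasurable, integral_fintype .of_finite,
    Fintype.expect_eq_sum_div_card, sum_div]
  refine sum_congr rfl fun x _ => ?_
  simp [measureReal_def, Measure.pi_singleton, map_restrict_singleton hμL, div_eq_inv_mul]

end TruncLabeling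

section TruncTrie

variable {M A n : ℕ}

lemma truncTrie_mono {ι : Type*} (Ls : ι → List (Fin M) → Fin A) :
    Monotone fun d => truncTrie d Ls :=
  fun _ _ h _ hw => ⟨hw.1, hw.2.trans_le h⟩

lemma truncTrie_subset (d : ℕ) (Ls : Fin n → List (Fin M) → Fin A) : truncTrie d Ls ⊆ GTrie Ls :=
  fun _ hw => hw.1

lemma eventually_subset_truncTrie {Ls : Fin n → List (Fin M) → Fin A}
    {t : Finset (List (Fin M × Fin A))} (ht : ↑t ⊆ GTrie Ls) :
    ∀ᶠ d in atTop, ↑t ⊆ truncTrie d Ls := by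
  filter_upwards [eventually_gt_atTop (t.sup List.length)] with d hd w hw
  exact ⟨ht hw, (le_sup (f := List.length) (mem_coe.1 hw)).trans_lt hd⟩

lemma finite_gtrie_of_ncard_truncTrie_le {Ls : Fin n → List (Fin M) → Fin A} {k : ℕ}
    (h : ∀ d, (truncTrie d Ls).ncard ≤ k) : (GTrie Ls).Finite := by
  by_contra infinite
  obtain ⟨t, ht, card_t⟩ := Set.Infinite.exists_subset_card_eq infinite (k + 1)
  obtain ⟨d, hd⟩ := (eventually_subset_truncTrie ht).exists
  have := Set.ncard_le_ncard hd (finite_truncTrie d Ls)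
  rw [Set.ncard_coe_finset, card_t] at this
  exact absurd (h d) (by omega)

lemma gtrieSize_nonneg (Ls : Fin n → List (Fin M) → Fin A) : 0 ≤ gtrieSize Ls := Nat.cast_nonneg _

lemma eventually_ncard_truncTrie_eq {Ls : Fin n → List (Fin M) → Fin A} (h : (GTrie Ls).Finite) :
    ∀ᶠ d in atTop, ((truncTrie d Ls).ncard : ℝ) = gtrieSize Ls := by
  filter_upwards [eventually_subset_truncTrie (t := h.toFinset) h.coe_toFinset.subset] with d hd
  rw [h.coe_toFinset] at hd
  rw [gtrieSize, (truncTrie_subset d Ls).antisymm hd]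

lemma ncard_truncTrie_le (d : ℕ) {Ls : Fin n → List (Fin M) → Fin A} (h : (GTrie Ls).Finite) :
    ((truncTrie d Ls).ncard : ℝ) ≤ gtrieSize Ls :=
  Nat.cast_le.2 (Set.ncard_le_ncard (truncTrie_subset d Ls) h)

lemma measurable_ncard_truncTrie (d : ℕ) :
    Measurable fun Ls : Fin n → List (Fin M) → Fin A => ((truncTrie d Ls).ncard : ℝ) := by
  simp only [← truncSize_restrict]
  exact (measurable_of_finite fun x => (truncSize M A d (Fin n) x : ℝ)).comp
    (TruncLabeling.measurable_restrict_pi d n)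

variable {μL : Measure (List (Fin M) → Fin A)} [IsProbabilityMeasure μL]

lemma integrable_ncard_truncTrie_pow (d m : ℕ) :
    Integrable (fun Ls : Fin n → List (Fin M) → Fin A => ((truncTrie d Ls).ncard : ℝ) ^ m)
      (Measure.pi fun _ => μL) := by
  simp only [← truncSize_restrict]
  exact Integrable.comp_measurable (g := fun x => (truncSize M A d (Fin n) x : ℝ) ^ m) .of_finite
    (TruncLabeling.measurable_restrict_pi d n)

lemma integral_ncard_truncTrie_pow [NeZero A] (hμL : IsLabelingMeasure (fun _ => (A : ℝ)⁻¹) μL)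
    (d m : ℕ) :
    ∫ Ls : Fin n → List (Fin M) → Fin A, ((truncTrie d Ls).ncard : ℝ) ^ m ∂(Measure.pi fun _ => μL)
      = m.factorial * coeff m (truncSeries M A d n) := by
  have moments := congrArg (coeff m) (expect_expSeries_truncSize (M := M) (A := A) d (Fin n))
  simp only [coeff_expect, coeff_expSeries, Fintype.card_fin, ← expect_div] at moments
  simp only [← truncSize_restrict]
  rw [TruncLabeling.integral_restrict_pi hμL d n fun x => (truncSize M A d (Fin n) x : ℝ) ^ m,
    ← moments, mul_div_cancel₀ _ (by positivity)]

end TruncTrie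

section Limit

variable {M A : ℕ} {μL : Measure (List (Fin M) → Fin A)} [IsProbabilityMeasure μL]

lemma lintegral_iSup_ncard_truncTrie_pow_lt_top (hM : 1 < M) (hMA : M < A)
    (hμL : IsLabelingMeasure (fun _ => (A : ℝ)⁻¹) μL) (n m : ℕ) :
    ∫⁻ Ls : Fin n → List (Fin M) → Fin A, ⨆ d, ENNReal.ofReal ((truncTrie d Ls).ncard ^ m)
      ∂(Measure.pi fun _ => μL) < ⊤ := by
  have : NeZero A := ⟨by omega⟩
  obtain ⟨K, hK⟩ := exists_abs_coeff_truncSeries_le hM hMA m n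
  rw [lintegral_iSup fun d => ((measurable_ncard_truncTrie d).pow_const m).ennreal_ofReal]
  · refine (iSup_le fun d => ?_).trans_lt (ENNReal.ofReal_lt_top (r := m.factorial * K))
    rw [← ofReal_integral_eq_lintegral_ofReal (integrable_ncard_truncTrie_pow d m)
      (ae_of_all _ fun Ls => by positivity), integral_ncard_truncTrie_pow hμL]
    gcongr
    exact (le_abs_self _).trans (hK d)
  · intro d d' h Ls
    beta_reduce
    gcongr
    · exact finite_truncTrie d' Ls
    · exact truncTrie_mono Ls h

lemma ae_finite_gtrie (hM : 1 < M) (hMA : M < A)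
    (hμL : IsLabelingMeasure (fun _ => (A : ℝ)⁻¹) μL) (n : ℕ) :
    ∀ᵐ Ls ∂(Measure.pi fun _ : Fin n => μL), (GTrie Ls).Finite := by
  have lintegral_lt_top := lintegral_iSup_ncard_truncTrie_pow_lt_top hM hMA hμL n 1
  filter_upwards [ae_lt_top (.iSup fun d =>
    ((measurable_ncard_truncTrie d).pow_const 1).ennreal_ofReal) lintegral_lt_top.ne] with Ls hLs
  obtain ⟨k, hk⟩ := ENNReal.exists_nat_gt hLs.ne
  refine finite_gtrie_of_ncard_truncTrie_le (k := k) fun d => ?_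
  have := (le_iSup (fun d => ENNReal.ofReal (((truncTrie d Ls).ncard : ℝ) ^ 1)) d).trans hk.le
  simpa using this

lemma ae_tendsto_ncard_truncTrie_pow (hM : 1 < M) (hMA : M < A)
    (hμL : IsLabelingMeasure (fun _ => (A : ℝ)⁻¹) μL) (n m : ℕ) :
    ∀ᵐ Ls ∂(Measure.pi fun _ : Fin n => μL),
      Tendsto (fun d => ((truncTrie d Ls).ncard : ℝ) ^ m) atTop (𝓝 (gtrieSize Ls ^ m)) := by
  filter_upwards [ae_finite_gtrie hM hMA hμL n] with Ls h
  exact tendsto_const_nhds.congr'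
    ((eventually_ncard_truncTrie_eq h).mono fun d hd => congrArg (· ^ m) hd.symm)

lemma integrable_gtrieSize_pow (hM : 1 < M) (hMA : M < A)
    (hμL : IsLabelingMeasure (fun _ => (A : ℝ)⁻¹) μL) (n m : ℕ) :
    Integrable (fun Ls => gtrieSize Ls ^ m) (Measure.pi fun _ : Fin n => μL) := by
  refine ⟨aestronglyMeasurable_of_tendsto_ae atTop
    (fun d => ((measurable_ncard_truncTrie d).pow_const m).aestronglyMeasurable)
    (ae_tendsto_ncard_truncTrie_pow hM hMA hμL n m), ?_⟩
  rw [hasFiniteIntegral_iff_ofReal (ae_of_all _ fun Ls => pow_nonneg (gtrieSize_nonneg Ls) m)]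
  refine (lintegral_mono_ae ?_).trans_lt
    (lintegral_iSup_ncard_truncTrie_pow_lt_top hM hMA hμL n m)
  filter_upwards [ae_finite_gtrie hM hMA hμL n] with Ls h
  obtain ⟨d, hd⟩ := (eventually_ncard_truncTrie_eq h).exists
  rw [← hd]
  exact le_iSup (fun d => ENNReal.ofReal (((truncTrie d Ls).ncard : ℝ) ^ m)) d

/-- The moment generating series of the size of the trie built from `n` independent labelings
with distribution `μL`. -/
noncomputable def momentSeries (μL : Measure (List (Fin M) → Fin A)) (n : ℕ) : ℝ⟦X⟧ :=
  .mk fun m => (∫ Ls, gtrieSize Ls ^ m ∂(Measure.pi fun _ : Fin n => μL)) / m.factorial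

lemma tendsto_coeff_truncSeries (hM : 1 < M) (hMA : M < A)
    (hμL : IsLabelingMeasure (fun _ => (A : ℝ)⁻¹) μL) (n m : ℕ) :
    Tendsto (fun d => coeff m (truncSeries M A d n)) atTop (𝓝 (coeff m (momentSeries μL n))) := by
  have : NeZero A := ⟨by omega⟩
  have dominated (d : ℕ) : ∀ᵐ Ls ∂(Measure.pi fun _ : Fin n => μL),
      ‖((truncTrie d Ls).ncard : ℝ) ^ m‖ ≤ gtrieSize Ls ^ m := by
    filter_upwards [ae_finite_gtrie hM hMA hμL n] with Ls h
    rw [Real.norm_of_nonneg (by positivity)]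
    gcongr
    exact ncard_truncTrie_le d h
  have := tendsto_integral_of_dominated_convergence _
    (fun d => ((measurable_ncard_truncTrie d).pow_const m).aestronglyMeasurable)
    (integrable_gtrieSize_pow hM hMA hμL n m) dominated
    (ae_tendsto_ncard_truncTrie_pow hM hMA hμL n m)
  simp only [integral_ncard_truncTrie_pow hμL] at this
  simpa [momentSeries, m.factorial_ne_zero] using this.div_const (m.factorial : ℝ)

lemma integral_gtrieSize_sub_pow (hM : 1 < M) (hMA : M < A)
    (hμL : IsLabelingMeasure (fun _ => (A : ℝ)⁻¹) μL) (n m : ℕ) (e : ℝ) :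
    ∫ Ls, (gtrieSize Ls - e) ^ m ∂(Measure.pi fun _ : Fin n => μL)
      = m.factorial * coeff m (expSeries (-e) * momentSeries μL n) := by
  have binomial (Ls : Fin n → List (Fin M) → Fin A) : (gtrieSize Ls - e) ^ m
      = ∑ q ∈ HasAntidiagonal.antidiagonal m, m.choose q.1 * (-e) ^ q.1 * gtrieSize Ls ^ q.2 := by
    simp only [sub_eq_neg_add, (Commute.all (-e) (gtrieSize Ls)).add_pow', nsmul_eq_mul, mul_assoc]
  simp only [binomial]
  rw [integral_finsetSum _ fun q _ => (integrable_gtrieSize_pow hM hMA hμL n q.2).const_mul _,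
    coeff_mul, mul_sum]
  refine sum_congr rfl fun q hq => ?_
  rw [integral_const_mul, coeff_expSeries, momentSeries, coeff_mk]
  rw [HasAntidiagonal.mem_antidiagonal] at hq
  have := Nat.add_choose_mul_factorial_mul_factorial q.1 q.2
  rw [hq, ← Nat.choose_symm_of_eq_add hq.symm] at this
  rw [← this]
  push_cast
  field_simp

open scoped PowerSeries.WithPiTopology in
theorem isMomentSystem_momentSeries (hM : 1 < M) (hMA : M < A)
    (hμL : IsLabelingMeasure (fun _ => (A : ℝ)⁻¹) μL) : IsMomentSystem A M (momentSeries μL) := by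
  have : NeZero A := ⟨by omega⟩
  have limit (n : ℕ) : Tendsto (fun d => truncSeries M A d n) atTop (𝓝 (momentSeries μL n)) :=
    (WithPiTopology.tendsto_iff_coeff_tendsto ℝ _ _ _).2 (tendsto_coeff_truncSeries hM hMA hμL n)
  refine ⟨hM, hMA, fun n => ?_, fun n => ?_, fun n => ?_⟩
  · simp [← coeff_zero_eq_constantCoeff_apply, momentSeries]
  · refine tendsto_nhds_unique ((limit n).comp (tendsto_add_atTop_nat 1)) ?_
    simp only [Function.comp_def, truncSeries, expect]
    exact ((tendsto_finsetSum _ fun c _ => tendsto_finsetProd _ fun a _ =>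
      limit (fiberCard c a)).const_smul _ |>.pow M).const_mul _
  · have := integral_gtrieSize_sub_pow hM hMA hμL n 2 (seriesMean (momentSeries μL) n)
    rw [Nat.factorial_two, Nat.cast_two] at this
    exact (integral_nonneg fun Ls => sq_nonneg _).trans_eq this

end Limit

/-! ### Central moments -/

lemma gaussianMoment_mul_rpow {v : ℝ} (m : ℕ) :
    gaussianMoment m * v ^ ((m : ℝ) / 2) = m.factorial * coeff m (gaussSeries v) := by
  rw [gaussianMoment, coeff_gaussSeries]
  split_ifs with h
  · obtain ⟨k, rfl⟩ := h.two_dvd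
    rw [Nat.mul_div_cancel_left k two_pos, Nat.cast_mul, Nat.cast_two,
      mul_div_cancel_left₀ _ two_ne_zero, Real.rpow_natCast, div_pow]
    field_simp
  · simp

lemma isBigO_natCast_add_one_rpow {s : ℝ} (hs : 0 ≤ s) :
    (fun n : ℕ => ((n : ℝ) + 1) ^ s) =O[atTop] fun n : ℕ => (n : ℝ) ^ s := by
  refine .of_bound (2 ^ s) ?_
  filter_upwards [eventually_ge_atTop 1] with n hn
  have : (1 : ℝ) ≤ n := by exact_mod_cast hn
  rw [Real.norm_of_nonneg (by positivity), Real.norm_of_nonneg (by positivity),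
    ← Real.mul_rpow two_pos.le (by positivity)]
  exact Real.rpow_le_rpow (by positivity) (by linarith) hs

section Moments

variable {A M : ℕ} {μL : Measure (List (Fin M) → Fin A)} [IsProbabilityMeasure μL]

lemma integral_gtrieSize (μL : Measure (List (Fin M) → Fin A)) (n : ℕ) :
    ∫ Ls, gtrieSize Ls ∂(Measure.pi fun _ : Fin n => μL) = seriesMean (momentSeries μL) n := by
  simp [seriesMean, momentSeries]

lemma integral_gtrieSize_sub_seriesMean_pow (hM : 1 < M) (hMA : M < A)
    (hμL : IsLabelingMeasure (fun _ => (A : ℝ)⁻¹) μL) (n m : ℕ) :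
    ∫ Ls, (gtrieSize Ls - seriesMean (momentSeries μL) n) ^ m ∂(Measure.pi fun _ : Fin n => μL)
      = m.factorial * coeff m (centredSeries (momentSeries μL) n) :=
  integral_gtrieSize_sub_pow hM hMA hμL n m _

lemma variance_gtrieSize (hM : 1 < M) (hMA : M < A)
    (hμL : IsLabelingMeasure (fun _ => (A : ℝ)⁻¹) μL) (n : ℕ) :
    variance (fun Ls => gtrieSize Ls) (Measure.pi fun _ : Fin n => μL)
      = seriesVariance (momentSeries μL) n := by
  have : Integrable (fun Ls => gtrieSize Ls) (Measure.pi fun _ : Fin n => μL) := by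
    simpa using integrable_gtrieSize_pow hM hMA hμL n 1
  rw [variance_eq_integral this.aemeasurable, integral_gtrieSize,
    integral_gtrieSize_sub_seriesMean_pow hM hMA hμL, seriesVariance, Nat.factorial_two,
    Nat.cast_two]

end Moments

end GTrie

/-- **Central moments of the size of a G-trie, uniform case** (Proposition 5).
In the uniform case `p_j = 1/A` with `ρ = 1 + log_A M > 1`, for every `m ≥ 0`,
`E[(S_n - E(S_n))^m] = g_m·Var(S_n)^{m/2} + o(n^{mρ/2})`. -/
theorem gtrie_central_moments_uniform_case
    {M A : ℕ} (hM : 2 ≤ M) (hA : 2 ≤ A) (hMA : M < A)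
    (p : Fin A → ℝ) (hp : ∀ j, p j = 1 / (A : ℝ))
    (ρ : ℝ) (hρ : ρ = 1 + Real.logb A M)
    (μL : Measure (List (Fin M) → Fin A)) [IsProbabilityMeasure μL]
    (hμL : IsLabelingMeasure p μL)
    (μ : (n : ℕ) → Measure (Fin n → List (Fin M) → Fin A))
    (hμ : ∀ n, μ n = Measure.pi fun _ => μL)
    (E V : ℕ → ℝ)
    (hE : ∀ n, E n = ∫ Ls, gtrieSize Ls ∂(μ n))
    (hV : ∀ n, V n = variance (fun Ls => gtrieSize Ls) (μ n))
    (CM : ℕ → ℕ → ℝ)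
    (hCM : ∀ m n, CM m n = ∫ Ls, (gtrieSize Ls - E n) ^ m ∂(μ n)) :
    ∀ m : ℕ,
      (fun n : ℕ => CM m n - gaussianMoment m * (V n) ^ ((m : ℝ) / 2))
        =o[atTop] (fun n : ℕ => (n : ℝ) ^ ((m : ℝ) * ρ / 2)) := by
  intro m
  obtain rfl : p = fun _ => (A : ℝ)⁻¹ := funext fun j => by rw [hp, one_div]
  have S := GTrie.isMomentSystem_momentSeries hM hMA hμL
  have defect_eq (n : ℕ) : CM m n - gaussianMoment m * V n ^ ((m : ℝ) / 2)
      = m.factorial * GTrie.gaussDefect (GTrie.momentSeries μL) m n := by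
    rw [hCM, hE, hV, hμ, GTrie.integral_gtrieSize, GTrie.variance_gtrieSize hM hMA hμL,
      GTrie.integral_gtrieSize_sub_seriesMean_pow hM hMA hμL, GTrie.gaussianMoment_mul_rpow,
      GTrie.gaussDefect, mul_sub]
  have exponent_nonneg : 0 ≤ (m : ℝ) * ρ / 2 := by
    have := S.one_lt_varianceExponent
    rw [GTrie.varianceExponent, ← hρ] at this
    positivity
  simp only [defect_eq]
  have defect_small := (S.isLittleO_gaussDefect m).const_mul_left (m.factorial : ℝ)
  rw [GTrie.varianceExponent, ← hρ] at defect_small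
  exact defect_small.trans_isBigO (GTrie.isBigO_natCast_add_one_rpow exponent_nonneg)
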